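/- arXiv:2202.00304 — 2 statements merged into one kernel-verified Lean document; each statement's English description precedes it below -/
import Mathlib

section
/- (Jyotilingam-type nonvanishing) Let N be a finite length graded S-module with k-th syzygy bundle P_k on P^n, k ≥ 1. Let Q be a vector bundle on P^n with H^l_*(Q) = M ≠ 0 for some l with k ≤ l ≤ n-2, and H^i_*(Q) = 0 for i = l-1, l-2, ..., l-k+2. Then H^{l+1}_*(P_k ⊗ Q) ≠ 0. -/
/-!
Background setup (the paper works on projective space `ℙⁿ` over a field `K`):
we encode a coherent sheaf on `ℙⁿ_K` by a module `M` over the homogeneous coordinate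
ring `S = K[X₀,…,Xₙ]` (namely `M = Γ_*` of the sheaf), and the intermediate cohomology
module `H^i_*(F) = ⊕_ν H^i(ℙⁿ, F(ν))` (for `i ≥ 1`) by the local cohomology module
`H^{i+1}_𝔪(M)` at the irrelevant maximal ideal `𝔪 = (X₀,…,Xₙ)`, to which it is
canonically isomorphic.
-/

open CategoryTheory TensorProduct

noncomputable section

/-- The homogeneous coordinate ring `S = K[X₀,…,Xₙ]` of `ℙⁿ`. -/
abbrev PolyS (K : Type) [Field K] (n : ℕ) : Type := MvPolynomial (Fin (n+1)) K

variable (K : Type) [Field K] (n : ℕ)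

/-- The irrelevant maximal ideal `𝔪 = (X₀,…,Xₙ)` of `S`. -/
def irrel : Ideal (PolyS K n) := Ideal.span (Set.range MvPolynomial.X)

/-- `H^i_*` of the sheaf on `ℙⁿ` associated to the `S`-module `M`, encoded (for `i ≥ 1`)
as the local cohomology module `H^{i+1}_𝔪(M)`. -/
def Hstar (i : ℕ) (M : Type) [AddCommGroup M] [Module (PolyS K n) M] :
    ModuleCat (PolyS K n) :=
  (localCohomology (irrel K n) (i+1)).obj (ModuleCat.of (PolyS K n) M)

/-- `M` is (the module of sections `Γ_*` of) an algebraic vector bundle on `ℙⁿ`: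
finitely generated, depth `≥ 2` at `𝔪` (i.e. `H⁰_𝔪(M) = H¹_𝔪(M) = 0`, so `M = Γ_*(M̃)`),
and locally free at every prime other than the irrelevant ideal. -/
structure IsBundleModule (M : Type) [AddCommGroup M] [Module (PolyS K n) M] : Prop where
  finite : Module.Finite (PolyS K n) M
  h0 : Subsingleton ((localCohomology (irrel K n) 0).obj (ModuleCat.of (PolyS K n) M))
  h1 : Subsingleton ((localCohomology (irrel K n) 1).obj (ModuleCat.of (PolyS K n) M))
  locFree : ∀ p : PrimeSpectrum (PolyS K n), p.asIdeal ≠ irrel K n →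
    Module.Free (Localization.AtPrime p.asIdeal) (LocalizedModule p.asIdeal.primeCompl M)

/-- `M` represents a vector bundle of rank two on `ℙⁿ`. -/
structure IsRankTwoBundleModule (M : Type) [AddCommGroup M] [Module (PolyS K n) M]
    extends IsBundleModule K n M : Prop where
  rank2 : ∀ p : PrimeSpectrum (PolyS K n), p.asIdeal ≠ irrel K n →
    Module.rank (Localization.AtPrime p.asIdeal) (LocalizedModule p.asIdeal.primeCompl M) = 2

/-- A finite length module which is moreover supported at the irrelevant ideal: the
(ungraded avatar of the) notion of a *graded* `S`-module of finite length. -/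
def IsGradedFiniteLength (N : Type) [AddCommGroup N] [Module (PolyS K n) N] : Prop :=
  IsFiniteLength (PolyS K n) N ∧
    ∃ c : ℕ, (irrel K n) ^ c ≤ Module.annihilator (PolyS K n) N

/-- A minimal graded free resolution `⋯ → L₁ → L₀ → N → 0` of an `S`-module `N`
(minimality: all differentials have entries in the maximal ideal `𝔪`).
Here `d i : L (i+1) → L i` and `P_k(N)`, the `k`-th syzygy module, is `range (d k)`,
i.e. the image of `f_{k+1} : L_{k+1} → L_k`. -/
structure MinimalResolution (N : Type) [AddCommGroup N] [Module (PolyS K n) N] where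
  L : ℕ → Type
  [addCommGroup : ∀ i, AddCommGroup (L i)]
  [module : ∀ i, Module (PolyS K n) (L i)]
  free : ∀ i, Module.Free (PolyS K n) (L i)
  finite : ∀ i, Module.Finite (PolyS K n) (L i)
  d : ∀ i : ℕ, L (i+1) →ₗ[PolyS K n] L i
  aug : L 0 →ₗ[PolyS K n] N
  aug_surjective : Function.Surjective aug
  exact0 : LinearMap.range (d 0) = LinearMap.ker aug
  exact : ∀ i : ℕ, LinearMap.range (d (i+1)) = LinearMap.ker (d i)
  minimal : ∀ i : ℕ, LinearMap.range (d i) ≤ (irrel K n) • (⊤ : Submodule (PolyS K n) (L i))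
  minimal0 : LinearMap.ker aug ≤ (irrel K n) • (⊤ : Submodule (PolyS K n) (L 0))

attribute [instance] MinimalResolution.addCommGroup MinimalResolution.module

namespace Jy
open Opposite Limits

variable {R : Type} [CommRing R]

abbrev OldExt (i : ℕ) (X Y : ModuleCat.{0} R) : ModuleCat.{0} R :=
  ((_root_.Ext R (ModuleCat.{0} R) i).obj (op X)).obj Y


def Rep {i : ℕ} {X Y : ModuleCat.{0} R} (P : ProjectiveResolution X) (f : P.complex.X i ⟶ Y)
    (x : OldExt i X Y) : Prop :=
  ∃ z : (P.complex.linearYonedaObj R Y).cycles i,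
    ((P.complex.linearYonedaObj R Y).iCycles i).hom z = f ∧
    ((P.complex.linearYonedaObj R Y).homologyπ i).hom z = (P.isoExt i Y).hom.hom x

lemma Rep.exists {i : ℕ} {X Y : ModuleCat.{0} R} (P : ProjectiveResolution X)
    (x : OldExt i X Y) : ∃ f, Rep P f x ∧ P.complex.d (i+1) i ≫ f = 0 := by
  obtain ⟨z, hz⟩ := (ModuleCat.epi_iff_surjective ((P.complex.linearYonedaObj R Y).homologyπ i)).1
    inferInstance ((P.isoExt i Y).hom.hom x)
  refine ⟨((P.complex.linearYonedaObj R Y).iCycles i).hom z, ⟨z, rfl, hz⟩, ?_⟩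
  have := (P.complex.linearYonedaObj R Y).iCycles_d i (i+1)
  exact congr($this z)

lemma Rep.of {i : ℕ} {X Y : ModuleCat.{0} R} (P : ProjectiveResolution X)
    (f : P.complex.X i ⟶ Y) (hf : P.complex.d (i+1) i ≫ f = 0) :
    ∃ x : OldExt i X Y, Rep P f x := by
  have h := (((P.complex.linearYonedaObj R Y).cyclesIsKernel i (i+1) (by simp)))
  have : ∃ z : (P.complex.linearYonedaObj R Y).cycles i,
    ((P.complex.linearYonedaObj R Y).iCycles i).hom z = f := by
    let g : ModuleCat.of R R ⟶ (P.complex.linearYonedaObj R Y).X i :=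
      ModuleCat.ofHom (LinearMap.toSpanSingleton R (P.complex.X i ⟶ Y) f)
    have hg : g ≫ (P.complex.linearYonedaObj R Y).d i (i+1) = 0 := by
      ext
      change P.complex.d (i+1) i ≫ ((1:R) • f) = 0
      simp [hf]
    refine ⟨((P.complex.linearYonedaObj R Y).liftCycles g (i+1) (by simp) hg).hom (1:R), ?_⟩
    have := (P.complex.linearYonedaObj R Y).liftCycles_i g (i+1) (by simp) hg
    have := congr($this (1:R))
    refine Eq.trans this ?_
    exact one_smul R f
  obtain ⟨z, hz⟩ := this
  refine ⟨(P.isoExt i Y).inv.hom (((P.complex.linearYonedaObj R Y).homologyπ i).hom z), z, hz, ?_⟩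
  simp

lemma Rep.zero_iff {i : ℕ} {X Y : ModuleCat.{0} R} (P : ProjectiveResolution X)
    (f : P.complex.X (i+1) ⟶ Y) (x : OldExt (i+1) X Y) (h : Rep P f x) :
    x = 0 ↔ ∃ g, P.complex.d (i+1) i ≫ g = f := by
  obtain ⟨z, hz, hx⟩ := h
  have e : x = 0 ↔ (P.isoExt (i+1) Y).hom.hom x = 0 := by
    constructor
    · rintro rfl; simp
    · intro h
      have : (P.isoExt (i+1) Y).inv.hom ((P.isoExt (i+1) Y).hom.hom x) = 0 := by
        rw [h]; simp
      simpa using this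
  rw [e, ← hx]
  have hex : (ShortComplex.mk _ _ ((P.complex.linearYonedaObj R Y).toCycles_comp_homologyπ
      i (i+1))).Exact :=
    ShortComplex.exact_of_g_is_cokernel _
      ((P.complex.linearYonedaObj R Y).homologyIsCokernel i (i+1) (by simp))
  rw [ShortComplex.moduleCat_exact_iff] at hex
  have hti := (P.complex.linearYonedaObj R Y).toCycles_i i (i+1)
  constructor
  · intro h
    obtain ⟨g, hg⟩ := hex z h
    refine ⟨g, ?_⟩
    have := congr($hti g)
    rw [← hz]
    refine Eq.trans this.symm ?_
    exact congrArg _ hg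
  · rintro ⟨g, hg⟩
    have h2 : ((P.complex.linearYonedaObj R Y).toCycles i (i+1)).hom g = z := by
      apply (ModuleCat.mono_iff_injective ((P.complex.linearYonedaObj R Y).iCycles (i+1))).1
        inferInstance
      refine Eq.trans (congr($hti g)) ?_
      exact hg.trans hz.symm
    rw [← h2]
    exact congr($((P.complex.linearYonedaObj R Y).toCycles_comp_homologyπ
      i (i+1)) g)

lemma nat_aux {C : Type*} [Category C] {E E' L L' U U' : C} (e : E ⟶ E') (a : E ⟶ L)
    (a' : E' ⟶ L') (m : L ⟶ L') (b : U ≅ L) (b' : U' ≅ L') (p : U ⟶ U')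
    (h1 : e ≫ a' = a ≫ m) (h2 : b.hom ≫ m = p ≫ b'.hom) :
    e ≫ a' ≫ b'.inv = (a ≫ b.inv) ≫ p := by
  have h3 : b.inv ≫ p = m ≫ b'.inv := by
    rw [Iso.inv_comp_eq, ← Category.assoc, h2]; simp
  rw [Category.assoc, h3, ← Category.assoc, h1, Category.assoc]

lemma Rep.map {i : ℕ} {X X' Y : ModuleCat.{0} R} {P : ProjectiveResolution X}
    {P' : ProjectiveResolution X'} {g : X' ⟶ X} (φ : ProjectiveResolution.Hom P' P g)
    (f : P.complex.X i ⟶ Y) (x : OldExt i X Y) (h : Rep P f x) :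
    Rep P' (φ.hom.f i ≫ f) ((((_root_.Ext R (ModuleCat.{0} R) i).map g.op).app Y).hom x) := by
  obtain ⟨z, hz, hx⟩ := h
  let F := ((linearYoneda R (ModuleCat.{0} R)).obj Y).rightOp
  let ψ : P.complex.linearYonedaObj R Y ⟶ P'.complex.linearYonedaObj R Y :=
    ((HomologicalComplex.unopFunctor _ _).map ((F.mapHomologicalComplex _).map φ.hom).op)
  have hnat : ((_root_.Ext R (ModuleCat.{0} R) i).map g.op).app Y ≫ (P'.isoExt i Y).hom =
      (P.isoExt i Y).hom ≫ HomologicalComplex.homologyMap ψ i := by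
    have h1 := ProjectiveResolution.isoLeftDerivedObj_inv_naturality g P' P φ.hom
      (by simpa using φ.hom_f_zero_comp_π_f_zero) F i
    have h2 := HomologicalComplex.homologyOp_hom_naturality ψ i
    have h1' : (((_root_.Ext R (ModuleCat.{0} R) i).map g.op).app Y) ≫
        (P'.isoLeftDerivedObj F i).inv.unop = (P.isoLeftDerivedObj F i).inv.unop ≫
          (HomologicalComplex.homologyMap ((F.mapHomologicalComplex _).map φ.hom) i).unop :=
      congrArg Quiver.Hom.unop h1
    have h2' : ((P.complex.linearYonedaObj R Y).homologyOp i).hom.unop ≫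
        (HomologicalComplex.homologyMap ((F.mapHomologicalComplex _).map φ.hom) i).unop =
        HomologicalComplex.homologyMap ψ i ≫
          ((P'.complex.linearYonedaObj R Y).homologyOp i).hom.unop :=
      congrArg Quiver.Hom.unop h2
    exact nat_aux _ _ _ _ (HomologicalComplex.homologyUnop
        ((F.mapHomologicalComplex _).obj P.complex) i)
      (HomologicalComplex.homologyUnop
        ((F.mapHomologicalComplex _).obj P'.complex) i) _ h1' h2'
  refine ⟨(HomologicalComplex.cyclesMap ψ i).hom z, ?_, ?_⟩
  · have := congr($(HomologicalComplex.cyclesMap_i ψ i) z)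
    refine Eq.trans this ?_
    change φ.hom.f i ≫ _ = _
    rw [← hz]; rfl
  · have := congr($(HomologicalComplex.homologyπ_naturality ψ i) z)
    refine Eq.trans this.symm ?_
    refine Eq.trans ?_ congr($hnat x).symm
    exact congrArg _ hx

/-- The quotient `R/J^t` as an object. -/
abbrev QJ (J : Ideal R) (t : ℕ) : ModuleCat.{0} R := ModuleCat.of R (R ⧸ J ^ t)

/-- The transition maps. -/
def tr (J : Ideal R) {t t' : ℕ} (h : t ≤ t') : QJ J t' ⟶ QJ J t :=
  ModuleCat.ofHom (Submodule.mapQ _ _ LinearMap.id (Ideal.pow_le_pow_right h))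

lemma old_new_zero {i : ℕ} {X X' Y : ModuleCat.{0} R} {P : ProjectiveResolution X}
    (g : X' ⟶ X) (f : P.complex.X (i+1) ⟶ Y) (hf : P.complex.d (i+1+1) (i+1) ≫ f = 0)
    (x : OldExt (i+1) X Y) (h : Rep P f x) :
    (((_root_.Ext R (ModuleCat.{0} R) (i+1)).map g.op).app Y).hom x = 0 ↔
    (Abelian.Ext.mk₀ g).comp (P.extMk f (i+1+1) rfl hf) (zero_add _) = 0 := by
  let P' := projectiveResolution X'
  let φ : ProjectiveResolution.Hom P' P g :=
    { hom := ProjectiveResolution.lift g P' P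
      hom_f_zero_comp_π_f_zero := by
        have := ProjectiveResolution.lift_commutes_zero g P' P
        simpa using this }
  rw [ProjectiveResolution.mk₀_comp_extMk f _ rfl hf φ,
    ProjectiveResolution.extMk_eq_zero_iff _ _ _ rfl _ i rfl,
    Rep.zero_iff P' _ _ (Rep.map φ f x h)]

lemma subsingleton_iff (J : Ideal R) (i : ℕ) (M : ModuleCat.{0} R) :
    Subsingleton ((localCohomology J (i+1)).obj M) ↔
      ∀ (t : ℕ) (e : Abelian.Ext.{0} (QJ J t) M (i+1)), ∃ (t' : ℕ) (h : t ≤ t'),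
        (Abelian.Ext.mk₀ (tr J h)).comp e (zero_add _) = 0 := by
  let D := localCohomology.diagram (localCohomology.idealPowersDiagram J) (i+1)
  have hc : HasColimit D := localCohomology.hasColimitDiagram.{0,0} _ _
  let ev := (evaluation (ModuleCat.{0} R) (ModuleCat.{0} R)).obj M
  let cc := ev.mapCocone (colimit.cocone D)
  have hcc : IsColimit cc := isColimitOfPreserves ev (colimit.isColimit D)
  have key : Subsingleton ((localCohomology J (i+1)).obj M) ↔
      ∀ (t : ℕ) (x : OldExt (i+1) (QJ J t) M), ∃ (t' : ℕ) (h : t ≤ t'),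
        (((_root_.Ext R (ModuleCat.{0} R) (i+1)).map (tr J h).op).app M).hom x = 0 := by
    constructor
    · intro hs t x
      have hs' : Subsingleton cc.pt := hs
      have := (Concrete.isColimit_rep_eq_iff_exists (D ⋙ ev) hcc (i := op (op t)) (j := op (op t))
        (x : (D ⋙ ev).obj (op (op t))) (0 : (D ⋙ ev).obj (op (op t)))).1 (hs'.elim _ _)
      obtain ⟨k, f, g, hfg⟩ := this
      refine ⟨k.unop.unop, f.unop.unop.down.down, ?_⟩
      refine Eq.trans hfg ?_
      exact map_zero ((D ⋙ ev).map g).hom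
    · intro h
      have : ∀ y : cc.pt, y = 0 := by
        intro y
        obtain ⟨k, x, rfl⟩ := Concrete.isColimit_exists_rep (D ⋙ ev) hcc y
        obtain ⟨t', ht, hx⟩ := h k.unop.unop x
        have := (Concrete.isColimit_rep_eq_iff_exists (D ⋙ ev) hcc (i := k) (j := k)
          x (0 : (D ⋙ ev).obj k)).2
          ⟨op (op t'), (homOfLE ht).op.op, (homOfLE ht).op.op, by
            refine Eq.trans hx ?_
            exact (map_zero ((D ⋙ ev).map (homOfLE ht).op.op).hom).symm⟩
        refine this.trans ?_
        exact map_zero (cc.ι.app k).hom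
      change Subsingleton cc.pt
      exact ⟨fun a b => (this a).trans (this b).symm⟩
  rw [key]
  constructor
  · intro h t e
    let P := projectiveResolution (QJ J t)
    obtain ⟨f, hf, rfl⟩ := P.extMk_surjective e _ rfl
    obtain ⟨x, hx⟩ := Rep.of P f hf
    obtain ⟨t', ht, h0⟩ := h t x
    exact ⟨t', ht, (old_new_zero (tr J ht) f hf x hx).1 h0⟩
  · intro h t x
    let P := projectiveResolution (QJ J t)
    obtain ⟨f, hx, hf⟩ := Rep.exists P x
    obtain ⟨t', ht, h0⟩ := h t (P.extMk f _ rfl hf)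
    exact ⟨t', ht, (old_new_zero (tr J ht) f hf x hx).2 h0⟩

end Jy

namespace Jy
open Abelian

section Bdefs
variable {R : Type} [CommRing R] (J : Ideal R)

lemma tr_refl (t : ℕ) : tr J (le_refl t) = 𝟙 _ := by
  refine ModuleCat.hom_ext (LinearMap.ext fun x => ?_)
  obtain ⟨x, rfl⟩ := Submodule.Quotient.mk_surjective _ x
  rfl

lemma tr_tr {a b c : ℕ} (h : a ≤ b) (h' : b ≤ c) : tr J h' ≫ tr J h = tr J (h.trans h') := by
  refine ModuleCat.hom_ext (LinearMap.ext fun x => ?_)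
  obtain ⟨x, rfl⟩ := Submodule.Quotient.mk_surjective _ x
  rfl

abbrev EJ (t i : ℕ) (M : Type) [AddCommGroup M] [Module R M] : Type :=
  Ext.{0} (QJ J t) (ModuleCat.of R M) i

def trE {t t' : ℕ} (h : t ≤ t') (i : ℕ) (M : Type) [AddCommGroup M] [Module R M] :
    EJ J t i M →ₗ[R] EJ J t' i M :=
  (Ext.mk₀ (tr J h)).precompOfLinear R _ (zero_add _)

lemma trE_apply {t t' : ℕ} (h : t ≤ t') (i : ℕ) (M : Type) [AddCommGroup M] [Module R M]
    (e : EJ J t i M) : trE J h i M e = (Ext.mk₀ (tr J h)).comp e (zero_add _) := rfl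

variable (i : ℕ) (M : Type) [AddCommGroup M] [Module R M]

instance trE_ds : DirectedSystem (fun t => EJ J t i M) (fun _ _ h => trE J h i M) where
  map_self t x := by
    rw [trE_apply, tr_refl]; simp
  map_map a b c hab hbc x := by
    simp only [trE_apply]
    rw [← Ext.comp_assoc_of_second_deg_zero, Ext.mk₀_comp_mk₀, tr_tr]

def Hloc : Type := Module.DirectLimit (fun t => EJ J t i M) (fun _ _ h => trE J h i M)

instance : AddCommGroup (Hloc J i M) :=
  inferInstanceAs (AddCommGroup (Module.DirectLimit (fun t => EJ J t i M) (fun _ _ h => trE J h i M)))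
instance : Module R (Hloc J i M) :=
  inferInstanceAs (Module R (Module.DirectLimit (fun t => EJ J t i M) (fun _ _ h => trE J h i M)))

def Hof (t : ℕ) : EJ J t i M →ₗ[R] Hloc J i M :=
  Module.DirectLimit.of R ℕ (fun t => EJ J t i M) (fun _ _ h => trE J h i M) t

lemma Hof_tr {t t' : ℕ} (h : t ≤ t') (e : EJ J t i M) :
    Hof J i M t' (trE J h i M e) = Hof J i M t e :=
  Module.DirectLimit.of_f

variable {J i M}
lemma Hof_exists (z : Hloc J i M) : ∃ t e, Hof J i M t e = z :=
  Module.DirectLimit.exists_of z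

lemma Hof_zero {t : ℕ} {e : EJ J t i M} (h : Hof J i M t e = 0) :
    ∃ (t' : ℕ) (h : t ≤ t'), trE J h i M e = 0 :=
  Module.DirectLimit.of.zero_exact h

lemma Hloc_subsingleton_iff : Subsingleton (Hloc J i M) ↔
    ∀ (t : ℕ) (e : EJ J t i M), ∃ (t' : ℕ) (h : t ≤ t'), trE J h i M e = 0 := by
  constructor
  · intro h t e
    exact Hof_zero (Subsingleton.elim _ _)
  · intro h
    refine subsingleton_of_forall_eq 0 fun z => ?_
    obtain ⟨t, e, rfl⟩ := Hof_exists z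
    obtain ⟨t', h1, h2⟩ := h t e
    rw [← Hof_tr J i M h1, h2, map_zero]

lemma Hloc_bridge : Subsingleton ((localCohomology J (i+1)).obj (ModuleCat.of R M)) ↔
    Subsingleton (Hloc J (i+1) M) := by
  rw [Hloc_subsingleton_iff, subsingleton_iff]; rfl

variable {N : Type} [AddCommGroup N] [Module R N]

/-- Generic construction of maps out of `Hloc` by postcomposition. -/
def Hpost {i j d : ℕ} (β : Ext.{0} (ModuleCat.of R M) (ModuleCat.of R N) d) (h : i + d = j) :
    Hloc J i M →ₗ[R] Hloc J j N :=
  Module.DirectLimit.map (fun t => β.postcompOfLinear R (QJ J t) h) (by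
    intro a b hab
    ext e
    simp only [LinearMap.comp_apply, LinearMap.flip_apply, Ext.bilinearCompOfLinear_apply_apply,
      trE_apply]
    rw [Ext.comp_assoc _ _ _ (zero_add i) h (by omega)])

lemma Hpost_of {i j d : ℕ} (β : Ext.{0} (ModuleCat.of R M) (ModuleCat.of R N) d) (h : i + d = j)
    (t : ℕ) (e : EJ J t i M) : Hpost β h (Hof J i M t e) = Hof J j N t (e.comp β h) :=
  Module.DirectLimit.map_apply_of _ _ _

def Hmap (J : Ideal R) (i : ℕ) (f : M →ₗ[R] N) : Hloc J i M →ₗ[R] Hloc J i N :=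
  Hpost (Ext.mk₀ (ModuleCat.ofHom f)) (add_zero i)

lemma Hmap_of (f : M →ₗ[R] N) (t : ℕ) (e : EJ J t i M) :
    Hmap J i f (Hof J i M t e) =
      Hof J i N t (e.comp (Ext.mk₀ (ModuleCat.ofHom f)) (add_zero i)) := Hpost_of _ _ _ _

variable {P : Type} [AddCommGroup P] [Module R P]

lemma Hmap_comp (g : N →ₗ[R] P) (f : M →ₗ[R] N) (z : Hloc J i M) :
    Hmap J i (g ∘ₗ f) z = Hmap J i g (Hmap J i f z) := by
  obtain ⟨t, e, rfl⟩ := Hof_exists z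
  simp only [Hmap_of]
  rw [Ext.comp_assoc_of_third_deg_zero, Ext.mk₀_comp_mk₀]; rfl

lemma Hmap_id (z : Hloc J i M) : Hmap J i LinearMap.id z = z := by
  obtain ⟨t, e, rfl⟩ := Hof_exists z
  simp only [Hmap_of]
  erw [Ext.comp_mk₀_id]

lemma Hmap_add (f g : M →ₗ[R] N) (z : Hloc J i M) :
    Hmap J i (f + g) z = Hmap J i f z + Hmap J i g z := by
  obtain ⟨t, e, rfl⟩ := Hof_exists z
  simp only [Hmap_of, ← map_add, ModuleCat.ofHom_add, Ext.mk₀_add, Ext.comp_add]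

lemma Hmap_smul (r : R) (f : M →ₗ[R] N) (z : Hloc J i M) :
    Hmap J i (r • f) z = r • Hmap J i f z := by
  obtain ⟨t, e, rfl⟩ := Hof_exists z
  simp only [Hmap_of, ← map_smul]
  rw [show ModuleCat.ofHom (r • f) = r • ModuleCat.ofHom f from rfl, Ext.mk₀_smul, Ext.comp_smul]

lemma Hmap_zero (z : Hloc J i M) : Hmap J i (0 : M →ₗ[R] N) z = 0 := by
  have := Hmap_smul (J := J) (i := i) (0 : R) (0 : M →ₗ[R] N) z
  simpa using this

lemma Hmap_sum {ι : Type} (s : Finset ι) (f : ι → M →ₗ[R] N) (z : Hloc J i M) :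
    Hmap J i (∑ a ∈ s, f a) z = ∑ a ∈ s, Hmap J i (f a) z := by
  classical
  induction s using Finset.induction_on with
  | empty => simp [Hmap_zero]
  | insert a s h ih => simp [Finset.sum_insert h, Hmap_add, ih]

lemma Hmap_smul_id (r : R) (z : Hloc J i M) :
    Hmap J i (r • (LinearMap.id : M →ₗ[R] M)) z = r • z := by
  rw [Hmap_smul, Hmap_id]

/-- torsion -/
lemma Hloc_torsion (z : Hloc J i M) : ∃ t, ∀ r ∈ J ^ t, r • z = 0 := by
  obtain ⟨t, e, rfl⟩ := Hof_exists z
  refine ⟨t, fun r hr => ?_⟩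
  rw [← map_smul]
  have : r • e = (Ext.mk₀ (r • 𝟙 (QJ J t))).comp e (zero_add i) := by
    rw [Ext.mk₀_smul, Ext.smul_comp, Ext.mk₀_id_comp]
  rw [this]
  have h0 : r • 𝟙 (QJ J t) = 0 := by
    refine ModuleCat.hom_ext (LinearMap.ext fun x => ?_)
    obtain ⟨x, rfl⟩ := Submodule.Quotient.mk_surjective _ x
    change Submodule.Quotient.mk (r • x) = 0
    rw [Submodule.Quotient.mk_eq_zero]
    exact Ideal.mul_mem_right _ _ hr
  rw [h0]; simp

lemma Hloc_injective_subsingleton [h : Injective (ModuleCat.of R M)] :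
    Subsingleton (Hloc J (i+1) M) := by
  rw [Hloc_subsingleton_iff]
  intro t e
  exact ⟨t, le_rfl, by rw [Ext.eq_zero_of_injective e, map_zero]⟩

section LES
variable (f : M →ₗ[R] N) (g : N →ₗ[R] P) (hf : Function.Injective f) (hg : Function.Surjective g)
  (hfg : Function.Exact f g)

lemma ses (f : M →ₗ[R] N) (g : N →ₗ[R] P) (hf : Function.Injective f)
    (hg : Function.Surjective g) (hfg : Function.Exact f g) :
    (ShortComplex.mk (ModuleCat.ofHom f) (ModuleCat.ofHom g)
      (by ext x; exact hfg.apply_apply_eq_zero x)).ShortExact :=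
  { exact := by
      rw [ShortComplex.moduleCat_exact_iff]
      intro x hx
      exact (hfg x).1 hx
    mono_f := (ModuleCat.mono_iff_injective _).2 hf
    epi_g := (ModuleCat.epi_iff_surjective _).2 hg }

def Hδ (J : Ideal R) (i : ℕ) : Hloc J i P →ₗ[R] Hloc J (i+1) M :=
  Hpost (ses f g hf hg hfg).extClass rfl

lemma Hδ_of (t : ℕ) (e : EJ J t i P) : Hδ f g hf hg hfg J i (Hof J i P t e) =
    Hof J (i+1) M t (e.comp (ses f g hf hg hfg).extClass rfl) := Hpost_of _ _ _ _

lemma Hloc_exact2 (f : M →ₗ[R] N) (g : N →ₗ[R] P) (hf : Function.Injective f)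
    (hg : Function.Surjective g) (hfg : Function.Exact f g) : Function.Exact (Hmap J i f) (Hmap J i g) := by
  intro z
  constructor
  · intro h
    obtain ⟨t, e, rfl⟩ := Hof_exists z
    rw [Hmap_of] at h
    obtain ⟨t', ht, h0⟩ := Hof_zero h
    have : (trE J ht i N e).comp (Ext.mk₀ (ModuleCat.ofHom g)) (add_zero i) = 0 := by
      rw [trE_apply, Ext.comp_assoc_of_third_deg_zero]
      exact h0
    obtain ⟨x, hx⟩ := Ext.covariant_sequence_exact₂ _ (ses f g hf hg hfg) _ this
    refine ⟨Hof J i M t' x, ?_⟩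
    rw [Hmap_of, ← Hof_tr J i N ht]
    exact congrArg _ hx
  · rintro ⟨w, rfl⟩
    rw [← Hmap_comp, show g ∘ₗ f = 0 from by ext x; exact hfg.apply_apply_eq_zero x, Hmap_zero]

lemma Hloc_exact3 : Function.Exact (Hmap J i g) (Hδ f g hf hg hfg J i) := by
  intro z
  constructor
  · intro h
    obtain ⟨t, e, rfl⟩ := Hof_exists z
    rw [Hδ_of] at h
    obtain ⟨t', ht, h0⟩ := Hof_zero h
    have : (trE J ht i P e).comp (ses f g hf hg hfg).extClass rfl = 0 := by
      rw [trE_apply, Ext.comp_assoc _ _ _ (zero_add i) rfl (by omega)]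
      exact h0
    obtain ⟨x, hx⟩ := Ext.covariant_sequence_exact₃ _ (ses f g hf hg hfg) _ rfl this
    refine ⟨Hof J i N t' x, ?_⟩
    rw [Hmap_of, ← Hof_tr J i P ht]
    exact congrArg _ hx
  · rintro ⟨w, rfl⟩
    obtain ⟨t, e, rfl⟩ := Hof_exists w
    rw [Hmap_of, Hδ_of, Ext.comp_assoc _ _ _ (add_zero i) (zero_add 1) (by omega)]
    erw [(ses f g hf hg hfg).comp_extClass]
    simp

lemma Hloc_exact1 : Function.Exact (Hδ f g hf hg hfg J i) (Hmap J (i+1) f) := by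
  intro z
  constructor
  · intro h
    obtain ⟨t, e, rfl⟩ := Hof_exists z
    rw [Hmap_of] at h
    obtain ⟨t', ht, h0⟩ := Hof_zero h
    have : (trE J ht (i+1) M e).comp (Ext.mk₀ (ModuleCat.ofHom f)) (add_zero _) = 0 := by
      rw [trE_apply, Ext.comp_assoc_of_third_deg_zero]
      exact h0
    obtain ⟨x, hx⟩ := Ext.covariant_sequence_exact₁ _ (ses f g hf hg hfg) _ this rfl
    refine ⟨Hof J i P t' x, ?_⟩
    rw [Hδ_of, ← Hof_tr J (i+1) M ht]
    exact congrArg _ hx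
  · rintro ⟨w, rfl⟩
    obtain ⟨t, e, rfl⟩ := Hof_exists w
    rw [Hδ_of, Hmap_of, Ext.comp_assoc _ _ _ rfl (add_zero 1) (by omega)]
    erw [(ses f g hf hg hfg).extClass_comp]
    simp
end LES

/-- degree zero: injectivity of f gives injectivity -/
lemma Hmap_zero_injective (f : M →ₗ[R] N) (hf : Function.Injective f) :
    Function.Injective (Hmap J 0 f) := by
  rw [injective_iff_map_eq_zero]
  intro z h
  obtain ⟨t, e, rfl⟩ := Hof_exists z
  rw [Hmap_of] at h
  obtain ⟨t', ht, h0⟩ := Hof_zero h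
  have : (trE J ht 0 M e).comp (Ext.mk₀ (ModuleCat.ofHom f)) (add_zero _) = 0 := by
      rw [trE_apply, Ext.comp_assoc_of_third_deg_zero]
      exact h0
  rw [← Hof_tr J 0 M ht]
  have hm : Mono (ModuleCat.ofHom f) := (ModuleCat.mono_iff_injective _).2 hf
  have := Ext.postcomp_mk₀_injective_of_mono (QJ J t') (ModuleCat.ofHom f) (a₁ := trE J ht 0 M e)
    (a₂ := 0) (by simpa using this)
  rw [this, map_zero]

/-- (5) -/
lemma Hmap_zero_surjective (g : M →ₗ[R] N) (hg : Function.Surjective g)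
    (hM : ∀ x : M, ∃ t, ∀ r ∈ J ^ t, r • x = 0) : Function.Surjective (Hmap J 0 g) := by
  intro z
  obtain ⟨t, e, rfl⟩ := Hof_exists z
  obtain ⟨u, rfl⟩ : ∃ u, Ext.mk₀ u = e := ⟨_, Ext.mk₀_linearEquiv₀_apply (R := R) e⟩
  obtain ⟨x, hx⟩ := hg (u.hom (Submodule.Quotient.mk 1))
  obtain ⟨s, hs⟩ := hM x
  have hle : J ^ (max s t) ≤ LinearMap.ker (LinearMap.toSpanSingleton R M x) := by
    intro r hr
    exact hs r (Ideal.pow_le_pow_right (le_max_left _ _) hr)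
  let v : QJ J (max s t) ⟶ ModuleCat.of R M := ModuleCat.ofHom (Submodule.liftQ _ _ hle)
  refine ⟨Hof J 0 M (max s t) (Ext.mk₀ v), ?_⟩
  rw [Hmap_of, ← Hof_tr J 0 N (le_max_right s t), trE_apply]
  erw [Ext.mk₀_comp_mk₀, Ext.mk₀_comp_mk₀]
  congr 2
  refine ModuleCat.hom_ext (LinearMap.ext fun y => ?_)
  obtain ⟨y, rfl⟩ := Submodule.Quotient.mk_surjective _ y
  change g (y • x) = u.hom (Submodule.Quotient.mk y)
  rw [map_smul, hx, ← map_smul]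
  congr 1
  change Submodule.Quotient.mk (y • 1) = _
  simp
end Bdefs
end Jy

namespace Jy
open Abelian

section B2
variable {R : Type} [CommRing R] (J : Ideal R)

def Tors (M : Type) [AddCommGroup M] [Module R M] : Prop :=
  ∀ x : M, ∃ t, ∀ r ∈ J ^ t, r • x = 0

def torsSub (M : Type) [AddCommGroup M] [Module R M] : Submodule R M where
  carrier := {x | ∃ t, ∀ r ∈ J ^ t, r • x = 0}
  zero_mem' := ⟨0, by simp⟩
  add_mem' := by
    rintro a b ⟨s, hs⟩ ⟨t, ht⟩
    refine ⟨max s t, fun r hr => ?_⟩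
    rw [smul_add, hs r (Ideal.pow_le_pow_right (le_max_left _ _) hr),
      ht r (Ideal.pow_le_pow_right (le_max_right _ _) hr), add_zero]
  smul_mem' := by
    rintro c x ⟨t, ht⟩
    refine ⟨t, fun r hr => ?_⟩
    rw [smul_comm, ht r hr, smul_zero]

variable {J} {M N : Type} [AddCommGroup M] [Module R M] [AddCommGroup N] [Module R N]

lemma tors_torsSub (M : Type) [AddCommGroup M] [Module R M] : Tors J (torsSub J M) := by
  rintro ⟨x, t, ht⟩
  exact ⟨t, fun r hr => Subtype.ext (ht r hr)⟩

lemma Tors.of_surj (h : Tors J M) (f : M →ₗ[R] N) (hf : Function.Surjective f) : Tors J N := by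
  intro y
  obtain ⟨x, rfl⟩ := hf y
  obtain ⟨t, ht⟩ := h x
  exact ⟨t, fun r hr => by rw [← map_smul, ht r hr, map_zero]⟩

lemma Tors.of_inj (h : Tors J N) (f : M →ₗ[R] N) (hf : Function.Injective f) : Tors J M := by
  intro x
  obtain ⟨t, ht⟩ := h (f x)
  exact ⟨t, fun r hr => hf (by rw [map_smul, ht r hr, map_zero])⟩

/-- a uniform bound for finite modules -/
lemma Tors.bound (h : Tors J N) [Module.Finite R M] (g : M →ₗ[R] N) :
    ∃ t, ∀ r ∈ J ^ t, ∀ x, r • g x = 0 := by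
  obtain ⟨s, hs⟩ := Module.Finite.fg_top (R := R) (M := M)
  choose t ht using h
  refine ⟨s.sup fun x => t (g x), fun r hr x => ?_⟩
  have : (⊤ : Submodule R M) ≤ LinearMap.ker (r • g) := by
    rw [← hs, Submodule.span_le]
    intro y hy
    simp only [SetLike.mem_coe, LinearMap.mem_ker, LinearMap.smul_apply]
    exact ht _ r (Ideal.pow_le_pow_right (Finset.le_sup (f := fun x => t (g x)) hy) hr)
  exact this (Submodule.mem_top (x := x))

lemma torsSub_injective [IsNoetherianRing R] (E : Type) [AddCommGroup E] [Module R E]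
    (hE : Module.Injective R E) : Module.Injective R (torsSub J E) := by
  apply Module.Baer.injective
  intro A g
  obtain ⟨t, ht⟩ := Tors.bound (tors_torsSub (J := J) E) g
  obtain ⟨k, hk⟩ := Ideal.exists_pow_inf_eq_pow_smul J A
  have hle := hk (k + t) (by omega)
  rw [Nat.add_sub_cancel_left] at hle
  have hkill : ∀ a (ha : a ∈ A), a ∈ J ^ (k+t) → g ⟨a, ha⟩ = 0 := by
    intro a ha haJ
    have h1 : a ∈ J ^ t • A := by
      have : a ∈ (J ^ (k+t) • ⊤ ⊓ A : Submodule R R) := ⟨by simpa using haJ, ha⟩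
      rw [hle] at this
      exact Submodule.smul_mono le_rfl inf_le_right this
    have h2 : ∀ (b : R) (_ : b ∈ J ^ t • A), ∃ hb : b ∈ A, g ⟨b, hb⟩ = 0 := by
      intro b hb
      refine Submodule.smul_induction_on hb ?_ ?_
      · intro r hr a' ha'
        refine ⟨A.smul_mem r ha', ?_⟩
        have := ht r hr ⟨a', ha'⟩
        rw [← map_smul] at this
        exact this
      · rintro x y ⟨hx, hx'⟩ ⟨hy, hy'⟩
        refine ⟨A.add_mem hx hy, ?_⟩
        have : g (⟨x, hx⟩ + ⟨y, hy⟩) = 0 := by rw [map_add, hx', hy', add_zero]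
        exact this
    exact (h2 a h1).2
  let q : A →ₗ[R] (R ⧸ J ^ (k+t)) := (Submodule.mkQ (J ^ (k+t))) ∘ₗ A.subtype
  have hker : LinearMap.ker q ≤ LinearMap.ker ((torsSub J E).subtype ∘ₗ g) := by
    intro a ha
    have : (a : R) ∈ J ^ (k+t) := by
      have : Submodule.Quotient.mk (p := J ^ (k+t)) (a : R) = 0 := ha
      rwa [Submodule.Quotient.mk_eq_zero] at this
    simp [hkill a.1 a.2 this]
  let φ := (LinearMap.ker q).liftQ _ hker
  let ψ : (A ⧸ LinearMap.ker q) →ₗ[R] (R ⧸ J ^ (k+t)) := (LinearMap.ker q).liftQ q le_rfl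
  have hψ : Function.Injective ψ := by
    rw [← LinearMap.ker_eq_bot]
    exact Submodule.ker_liftQ_eq_bot _ _ _ le_rfl
  obtain ⟨u, hu⟩ := hE.out ψ hψ φ
  let e : E := u (Submodule.Quotient.mk 1)
  have he : e ∈ torsSub J E := by
    refine ⟨k+t, fun r hr => ?_⟩
    change r • u _ = 0
    rw [← map_smul, ← Submodule.Quotient.mk_smul, smul_eq_mul, mul_one,
      (Submodule.Quotient.mk_eq_zero _).2 hr, map_zero]
  refine ⟨LinearMap.toSpanSingleton R _ ⟨e, he⟩, fun x hx => ?_⟩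
  apply Subtype.ext
  have := hu (Submodule.Quotient.mk ⟨x, hx⟩)
  have h3 : φ (Submodule.Quotient.mk ⟨x, hx⟩) = (g ⟨x, hx⟩ : E) := rfl
  rw [← h3, ← this]
  change x • u _ = u _
  rw [← map_smul, ← Submodule.Quotient.mk_smul, smul_eq_mul, mul_one]
  rfl

/-- embedding -/
lemma tors_embed [IsNoetherianRing R] (T : Type) [AddCommGroup T] [Module R T] (hT : Tors J T) :
    ∃ (I : Type) (_ : AddCommGroup I) (_ : Module R I) (f : T →ₗ[R] I), Function.Injective f ∧
      Tors J I ∧ ∀ i, Subsingleton (Hloc J (i+1) I) := by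
  let E := Injective.under (ModuleCat.of R T)
  have hE : Module.Injective R E := by
    have : Injective (ModuleCat.of R E) := inferInstanceAs (Injective E)
    exact Module.injective_module_of_injective_object R E
  let ι : T →ₗ[R] E := (Injective.ι (ModuleCat.of R T)).hom
  have hι : Function.Injective ι := (ModuleCat.mono_iff_injective (Injective.ι (ModuleCat.of R T))).1 inferInstance
  refine ⟨torsSub J E, inferInstance, inferInstance, ι.codRestrict _ ?_, ?_, tors_torsSub _, ?_⟩
  · intro x
    obtain ⟨t, ht⟩ := hT x
    exact ⟨t, fun r hr => by rw [← map_smul, ht r hr, map_zero]⟩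
  · intro x y h
    exact hι (congrArg Subtype.val h)
  · intro i
    have := torsSub_injective (J := J) E hE
    have := Module.injective_object_of_injective_module R (torsSub J E)
    exact Hloc_injective_subsingleton

section SES
variable {A B C : Type} [AddCommGroup A] [Module R A] [AddCommGroup B] [Module R B]
  [AddCommGroup C] [Module R C] (f : A →ₗ[R] B) (g : B →ₗ[R] C)

lemma ses_left_zero (hf : Function.Injective f) (hg : Function.Surjective g)
    (hfg : Function.Exact f g) (i : ℕ)
    (h1 : Function.Surjective (Hmap J i g)) (h2 : Subsingleton (Hloc J (i+1) B)) :
    Subsingleton (Hloc J (i+1) A) := by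
  refine subsingleton_of_forall_eq 0 fun z => ?_
  obtain ⟨w, rfl⟩ := (Hloc_exact1 (J := J) (i := i) f g hf hg hfg z).1 (Subsingleton.elim _ _)
  exact (Hloc_exact3 (J := J) (i := i) f g hf hg hfg w).2 (h1 w)

lemma ses_right_surj (hf : Function.Injective f) (hg : Function.Surjective g)
    (hfg : Function.Exact f g) (i : ℕ)
    (h1 : Subsingleton (Hloc J (i+1) A)) : Function.Surjective (Hmap J i g) := fun w =>
  (Hloc_exact3 (J := J) (i := i) f g hf hg hfg w).1 (Subsingleton.elim _ _)

lemma ses_left_inj (hf : Function.Injective f) (hg : Function.Surjective g)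
    (hfg : Function.Exact f g) (i : ℕ)
    (h1 : Subsingleton (Hloc J i C)) : Function.Injective (Hmap J (i+1) f) := by
  rw [injective_iff_map_eq_zero]
  intro z hz
  obtain ⟨w, rfl⟩ := (Hloc_exact1 (J := J) (i := i) f g hf hg hfg z).1 hz
  rw [Subsingleton.elim w 0, map_zero]
end SES

lemma Hloc_tors [IsNoetherianRing R] (i : ℕ) : ∀ (T : Type) [AddCommGroup T] [Module R T],
    Tors J T → Subsingleton (Hloc J (i+1) T) := by
  induction i with
  | zero =>
    intro T _ _ hT
    obtain ⟨I, _, _, f, hf, hI, hi⟩ := tors_embed T hT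
    exact ses_left_zero f (LinearMap.range f).mkQ hf (Submodule.mkQ_surjective _)
      (LinearMap.exact_map_mkQ_range f) 0
      (Hmap_zero_surjective _ (Submodule.mkQ_surjective _) hI) (hi 0)
  | succ i ih =>
    intro T _ _ hT
    obtain ⟨I, _, _, f, hf, hI, hi⟩ := tors_embed T hT
    refine ses_left_zero f (LinearMap.range f).mkQ hf (Submodule.mkQ_surjective _)
      (LinearMap.exact_map_mkQ_range f) (i+1) (fun z => ⟨0, ?_⟩) (hi _)
    have := ih (I ⧸ LinearMap.range f) (hI.of_surj (LinearMap.range f).mkQ (Submodule.mkQ_surjective _))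
    exact Subsingleton.elim _ _

section QSES
variable [IsNoetherianRing R]
  {A B C : Type} [AddCommGroup A] [Module R A] [AddCommGroup B] [Module R B]
  [AddCommGroup C] [Module R C] (f : A →ₗ[R] B) (g : B →ₗ[R] C)

lemma qrange (hf : Tors J (LinearMap.ker f)) (i : ℕ) :
    Function.Bijective (Hmap J (i+1) f.rangeRestrict) := by
  have hex : Function.Exact (LinearMap.ker f).subtype f.rangeRestrict := by
    intro x
    constructor
    · intro h
      exact ⟨⟨x, congrArg Subtype.val h⟩, rfl⟩
    · rintro ⟨y, rfl⟩
      exact Subtype.ext y.2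
  have hs := LinearMap.surjective_rangeRestrict f
  have hi := Submodule.subtype_injective (LinearMap.ker f)
  constructor
  · rw [injective_iff_map_eq_zero]
    intro z hz
    obtain ⟨w, rfl⟩ := (Hloc_exact2 (J := J) (i := i+1) _ _ hi hs hex z).1 hz
    have := Hloc_tors (J := J) i _ hf
    rw [Subsingleton.elim w 0, map_zero]
  · exact ses_right_surj _ _ hi hs hex _ (Hloc_tors (J := J) (i+1) _ hf)

lemma range_exact (hfg : Function.Exact f g) : Function.Exact (LinearMap.range f).subtype g := by
  intro x
  rw [hfg x]
  simp

lemma q_surj (hf : Tors J (LinearMap.ker f)) (hg : Function.Surjective g)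
    (hfg : Function.Exact f g) (i : ℕ)
    (h1 : Subsingleton (Hloc J (i+1) A)) : Function.Surjective (Hmap J i g) :=
  ses_right_surj _ _ (Submodule.subtype_injective _) hg (range_exact f g hfg) i
    (qrange f hf i).2.subsingleton

lemma q_exact (hf : Tors J (LinearMap.ker f)) (hg : Function.Surjective g)
    (hfg : Function.Exact f g) (i : ℕ) : Function.Exact (Hmap J (i+1) f) (Hmap J (i+1) g) := by
  intro z
  rw [Hloc_exact2 (J := J) (i := i+1) _ _ (Submodule.subtype_injective _) hg
    (range_exact f g hfg) z]
  constructor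
  · rintro ⟨w, rfl⟩
    obtain ⟨v, rfl⟩ := (qrange f hf i).2 w
    exact ⟨v, by rw [← Hmap_comp]; rfl⟩
  · rintro ⟨v, rfl⟩
    exact ⟨Hmap J (i+1) f.rangeRestrict v, by rw [← Hmap_comp]; rfl⟩

lemma q_inj (hf : Tors J (LinearMap.ker f)) (hg : Function.Surjective g)
    (hfg : Function.Exact f g) (i : ℕ)
    (h1 : Subsingleton (Hloc J i C)) : Function.Injective (Hmap J (i+1) f) := by
  have h := (ses_left_inj _ _ (Submodule.subtype_injective _) hg (range_exact f g hfg) i h1).comp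
    (qrange f hf i).1
  intro a b hab
  apply h
  simp only [Function.comp, ← Hmap_comp]
  exact hab
end QSES
end B2
end Jy

namespace Jy
open Abelian Pointwise

section B3
variable {R : Type} [CommRing R] {J : Ideal R}

lemma H_zero_of_inj {M : Type} [AddCommGroup M] [Module R M] {i : ℕ} {x : R} (hx : x ∈ J)
    (h : Function.Injective (Hmap J i (x • (LinearMap.id : M →ₗ[R] M)))) :
    Subsingleton (Hloc J i M) := by
  refine subsingleton_of_forall_eq 0 fun z => ?_
  obtain ⟨t, ht⟩ := Hloc_torsion z
  have h1 := ht _ (Ideal.pow_mem_pow hx t)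
  clear ht
  induction t with
  | zero => simpa using h1
  | succ t ih =>
    apply ih
    apply h
    rw [Hmap_smul_id, smul_smul, ← pow_succ', h1, map_zero]

lemma H_regular (rs : List R) : ∀ (M : Type) [AddCommGroup M] [Module R M],
    (∀ r ∈ rs, r ∈ J) → RingTheory.Sequence.IsWeaklyRegular M rs → ∀ i < rs.length,
      Subsingleton (Hloc J i M) := by
  induction rs with
  | nil => intro M _ _ _ _ i hi; simp at hi
  | cons r rs ih =>
    intro M _ _ hJ hreg i hi
    rw [RingTheory.Sequence.isWeaklyRegular_cons_iff] at hreg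
    have hinj : Function.Injective (r • (LinearMap.id : M →ₗ[R] M)) := hreg.1
    apply H_zero_of_inj (hJ r (by simp))
    cases i with
    | zero => exact Hmap_zero_injective _ hinj
    | succ j =>
      refine ses_left_inj _ (Submodule.mkQ (r • (⊤ : Submodule R M))) hinj
        (Submodule.mkQ_surjective _) ?_ j
        (ih (QuotSMulTop r M) (fun s hs => hJ s (by simp [hs])) hreg.2 j (by simpa using hi))
      intro y
      rw [Submodule.mkQ_apply, Submodule.Quotient.mk_eq_zero, Submodule.mem_smul_pointwise_iff_exists]
      simp

lemma H_finite_free {J : Ideal R} {i : ℕ} (h : Subsingleton (Hloc J i R))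
    (F : Type) [AddCommGroup F] [Module R F] [Module.Free R F] [Module.Finite R F] :
    Subsingleton (Hloc J i F) := by
  let b := Module.Free.chooseBasis R F
  refine subsingleton_of_forall_eq 0 fun z => ?_
  have : (LinearMap.id : F →ₗ[R] F) = ∑ a, (LinearMap.toSpanSingleton R F (b a)) ∘ₗ b.coord a := by
    ext x
    simp [b.sum_repr]
  rw [← Hmap_id z, this, Hmap_sum]
  refine Finset.sum_eq_zero fun a _ => ?_
  rw [Hmap_comp, Subsingleton.elim (Hmap J i (b.coord a) z) 0, map_zero]

end B3
section
variable (K : Type) [Field K] (n : ℕ)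

lemma poly_regular : RingTheory.Sequence.IsWeaklyRegular (PolyS K n)
    (List.ofFn (fun i : Fin (n+1) => (MvPolynomial.X i : PolyS K n))) := by
  refine ⟨fun i hi => ?_⟩
  have hi' : i < n + 1 := by simpa using hi
  rw [isSMulRegular_quotient_iff_mem_of_smul_mem]
  have hid : (Ideal.ofList (List.take i (List.ofFn
      (fun i : Fin (n+1) => (MvPolynomial.X i : PolyS K n)))) • ⊤ : Submodule (PolyS K n) (PolyS K n))
      = Ideal.span (MvPolynomial.X '' {j : Fin (n+1) | j.1 < i}) := by
    rw [smul_eq_mul, Ideal.mul_top]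
    unfold Ideal.ofList
    congr 1
    ext x
    simp only [Set.mem_ofPred_eq, List.mem_take_iff_getElem, Set.mem_image]
    constructor
    · rintro ⟨j, hj, rfl⟩
      simp only [List.length_ofFn, lt_inf_iff] at hj
      exact ⟨⟨j, hj.2⟩, hj.1, by rw [List.getElem_ofFn]⟩
    · rintro ⟨j, hj, rfl⟩
      exact ⟨j.1, by simp; omega, by rw [List.getElem_ofFn]⟩
  rw [hid]
  intro p hp
  rw [MvPolynomial.mem_ideal_span_X_image] at hp ⊢
  intro m hm
  have : m + Finsupp.single ⟨i, hi'⟩ 1 ∈ (((List.ofFn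
      (fun i : Fin (n+1) => (MvPolynomial.X i : PolyS K n)))[i]) • p).support := by
    rw [MvPolynomial.mem_support_iff] at hm ⊢
    rw [List.getElem_ofFn, smul_eq_mul, add_comm m, MvPolynomial.coeff_X_mul]
    exact hm
  obtain ⟨j, hj, h⟩ := hp _ this
  refine ⟨j, hj, ?_⟩
  have hne : (⟨i, hi'⟩ : Fin (n+1)) ≠ j := by
    rintro rfl; exact lt_irrefl i hj
  simpa [Finsupp.single_apply, hne] using h

lemma H_poly (i : ℕ) (hi : i ≤ n) : Subsingleton (Hloc (irrel K n) i (PolyS K n)) := by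
  refine H_regular _ _ ?_ (poly_regular K n) i (by simp; omega)
  intro r hr
  obtain ⟨j, rfl⟩ := (List.mem_ofFn' _ _).1 hr
  exact Ideal.subset_span ⟨j, rfl⟩
end
end Jy

namespace Jy
open Abelian

section B4
variable {R : Type} [CommRing R] (J : Ideal R) (i : ℕ)
variable (L : Type) [AddCommGroup L] [Module R L] (Q : Type) [AddCommGroup Q] [Module R Q]

def theta : L ⊗[R] Hloc J i Q →ₗ[R] Hloc J i (L ⊗[R] Q) :=
  TensorProduct.lift (LinearMap.mk₂ R (fun x h => Hmap J i (TensorProduct.mk R L Q x) h)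
    (fun a b h => by rw [map_add, Hmap_add]) (fun c a h => by rw [map_smul, Hmap_smul])
    (fun a h h' => by rw [map_add]) (fun c a h => by rw [map_smul]))

variable {J i L Q}
lemma theta_tmul (x : L) (h : Hloc J i Q) :
    theta J i L Q (x ⊗ₜ h) = Hmap J i (TensorProduct.mk R L Q x) h := rfl

lemma theta_nat {L' : Type} [AddCommGroup L'] [Module R L'] (f : L →ₗ[R] L')
    (y : L ⊗[R] Hloc J i Q) :
    Hmap J i (f.rTensor Q) (theta J i L Q y) = theta J i L' Q (f.rTensor _ y) := by
  induction y with
  | zero => simp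
  | add a b ha hb => simp only [map_add, ha, hb]
  | tmul x h =>
    rw [LinearMap.rTensor_tmul, theta_tmul, theta_tmul, ← Hmap_comp]
    rfl

lemma theta_bij [Module.Free R L] [Module.Finite R L] :
    Function.Bijective (theta J i L Q) := by
  let b := Module.Free.chooseBasis R L
  let cQ : ∀ a, L ⊗[R] Q →ₗ[R] Q := fun a =>
    (TensorProduct.lid R Q).toLinearMap ∘ₗ (b.coord a).rTensor Q
  let ψ : Hloc J i (L ⊗[R] Q) →ₗ[R] L ⊗[R] Hloc J i Q :=
    ∑ a, (TensorProduct.mk R L (Hloc J i Q) (b a)) ∘ₗ Hmap J i (cQ a)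
  constructor
  · have : ψ ∘ₗ theta J i L Q = LinearMap.id := by
      ext x h
      have h1 : ∀ a, cQ a ∘ₗ TensorProduct.mk R L Q x = b.coord a x • LinearMap.id := by
        intro a; ext q; simp [cQ]
      simp only [ψ, TensorProduct.AlgebraTensorModule.curry_apply, LinearMap.restrictScalars_self,
        TensorProduct.curry_apply, LinearMap.comp_apply, theta_tmul, LinearMap.sum_apply,
        TensorProduct.mk_apply, ← Hmap_comp, h1, Hmap_smul_id, TensorProduct.tmul_smul,
        LinearMap.id_apply]
      conv_rhs => rw [← b.sum_repr x, TensorProduct.sum_tmul]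
      simp [TensorProduct.smul_tmul']
    exact Function.LeftInverse.injective (g := ψ) fun y => congr($this y)
  · intro z
    refine ⟨ψ z, ?_⟩
    simp only [ψ, LinearMap.sum_apply, map_sum, LinearMap.comp_apply, TensorProduct.mk_apply,
      theta_tmul, ← Hmap_comp, ← Hmap_sum]
    convert Hmap_id z
    ext x q
    simp only [cQ, TensorProduct.AlgebraTensorModule.curry_apply, LinearMap.restrictScalars_self,
        TensorProduct.curry_apply, LinearMap.comp_apply, LinearMap.sum_apply,
        TensorProduct.mk_apply, LinearMap.id_apply, LinearMap.rTensor_tmul,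
        LinearEquiv.coe_coe, TensorProduct.lid_tmul, TensorProduct.tmul_smul]
    conv_rhs => rw [← b.sum_repr x, TensorProduct.sum_tmul]
    simp [TensorProduct.smul_tmul']
end B4
end Jy

namespace Jy
open Abelian

section C
variable {R : Type} [CommRing R] [IsNoetherianRing R] (J : Ideal R)
variable (Q : Type) [AddCommGroup Q] [Module R Q]

/-- Multiplication by elements of a power of `J` factors through a finite free module. -/
def Factors (t r : ℕ) : Prop := ∀ s ∈ J ^ t, ∃ (α : Q →ₗ[R] (Fin r → R)) (β : (Fin r → R) →ₗ[R] Q),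
  β ∘ₗ α = s • LinearMap.id

def splitIdeal {F : Type} [AddCommGroup F] [Module R F] (π : F →ₗ[R] Q) : Ideal R where
  carrier := {s | ∃ α : Q →ₗ[R] F, π ∘ₗ α = s • LinearMap.id}
  zero_mem' := ⟨0, by simp⟩
  add_mem' := by
    rintro a b ⟨α, hα⟩ ⟨β, hβ⟩
    exact ⟨α + β, by rw [LinearMap.comp_add, hα, hβ, add_smul]⟩
  smul_mem' := by
    rintro c a ⟨α, hα⟩
    exact ⟨c • α, by rw [LinearMap.comp_smul, hα, smul_eq_mul, mul_smul]⟩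

lemma split_local {F : Type} [AddCommGroup F] [Module R F] (π : F →ₗ[R] Q)
    (hπ : Function.Surjective π) [Module.Finite R Q] (p : PrimeSpectrum R)
    (hp : Module.Free (Localization.AtPrime p.asIdeal) (LocalizedModule p.asIdeal.primeCompl Q)) :
    ¬ splitIdeal Q π ≤ p.asIdeal := by
  intro hle
  let S := p.asIdeal.primeCompl
  have hfp : Module.FinitePresentation R Q := Module.finitePresentation_of_finite R Q
  let πp := LocalizedModule.map S π
  have hs : Function.Surjective πp := LocalizedModule.map_surjective S π hπ
  obtain ⟨σ, hσ⟩ := Module.projective_lifting_property πp LinearMap.id hs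
  let f := LocalizedModule.mkLinearMap S F
  let q := LocalizedModule.mkLinearMap S Q
  obtain ⟨h, s, hh⟩ := Module.FinitePresentation.exists_lift_of_isLocalizedModule S f
    ((σ.restrictScalars R) ∘ₗ q)
  have key : q ∘ₗ (π ∘ₗ h) = q ∘ₗ ((s : R) • LinearMap.id) := by
    ext x
    have h1 : f (h x) = (s : R) • σ (q x) := congr($hh x)
    have h2 : πp (f (h x)) = q (π (h x)) := by
      simp [πp, f, q]
    simp only [LinearMap.comp_apply, LinearMap.smul_apply, LinearMap.id_apply]
    have h3 : πp (σ (q x)) = q x := congr($hσ (q x))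
    rw [← h2, h1, LinearMap.map_smul_of_tower, h3, map_smul]
  obtain ⟨s', hs'⟩ := Module.Finite.exists_smul_of_comp_eq_of_isLocalizedModule S q _ _ key
  have hmem : (s' : R) * s ∈ splitIdeal Q π := by
    refine ⟨(s' : R) • h, ?_⟩
    rw [LinearMap.comp_smul, mul_smul]
    exact hs'
  exact (S.mul_mem s'.2 s.2) (hle hmem)

lemma exists_factors [Module.Finite R Q] (h : ∀ p : PrimeSpectrum R, p.asIdeal ≠ J →
    Module.Free (Localization.AtPrime p.asIdeal) (LocalizedModule p.asIdeal.primeCompl Q)) :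
    ∃ t r, Factors J Q t r := by
  obtain ⟨r, π, hπ⟩ := Module.Finite.exists_fin' R Q
  have hrad : J ≤ (splitIdeal Q π).radical := by
    rw [Ideal.radical_eq_sInf]
    refine le_sInf ?_
    rintro p ⟨hp, hpp⟩
    by_contra hne
    exact split_local Q π hπ ⟨p, hpp⟩ (h ⟨p, hpp⟩ (by rintro rfl; exact hne le_rfl)) hp
  obtain ⟨t, ht⟩ := Ideal.exists_pow_le_of_le_radical_of_fg hrad (IsNoetherian.noetherian J)
  exact ⟨t, r, fun s hs => by
    obtain ⟨α, hα⟩ := ht hs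
    exact ⟨α, π, hα⟩⟩

variable {J Q}
lemma Factors.H_kill {t r i : ℕ} (h : Factors J Q t r) (hR : Subsingleton (Hloc J i R)) :
    ∀ s ∈ J ^ t, ∀ z : Hloc J i Q, s • z = 0 := by
  intro s hs z
  obtain ⟨α, β, hab⟩ := h s hs
  have := H_finite_free hR (Fin r → R)
  rw [← Hmap_smul_id, ← hab, Hmap_comp, Subsingleton.elim (Hmap J i α z) 0, map_zero]

lemma Factors.ker_tors {t r : ℕ} (h : Factors J Q t r) {P L : Type} [AddCommGroup P] [Module R P]
    [AddCommGroup L] [Module R L] (ι : P →ₗ[R] L) (hι : Function.Injective ι) :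
    Tors J (LinearMap.ker (ι.rTensor Q)) := by
  rintro ⟨y, hy⟩
  refine ⟨t, fun s hs => ?_⟩
  obtain ⟨α, β, hab⟩ := h s hs
  apply Subtype.ext
  change s • y = 0
  have h1 : s • y = β.lTensor P (α.lTensor P y) := by
    rw [← LinearMap.comp_apply, ← LinearMap.lTensor_comp, hab, LinearMap.lTensor_smul]
    simp
  have h2 : α.lTensor P y = 0 := by
    apply Module.Flat.rTensor_preserves_injective_linearMap (M := Fin r → R) ι hι
    rw [map_zero, ← LinearMap.comp_apply, LinearMap.rTensor_comp_lTensor,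
      ← LinearMap.lTensor_comp_rTensor, LinearMap.comp_apply, LinearMap.mem_ker.1 hy, map_zero]
  rw [h1, h2, map_zero]
end C
end Jy

namespace Jy
open Abelian

section D
variable {R : Type} [CommRing R] [IsNoetherianRing R] {J : Ideal R}
  {N : Type} [AddCommGroup N] [Module R N]
  {L : ℕ → Type} [∀ i, AddCommGroup (L i)] [∀ i, Module R (L i)]
  [∀ i, Module.Free R (L i)] [∀ i, Module.Finite R (L i)]
  {d : ∀ i : ℕ, L (i+1) →ₗ[R] L i} {aug : L 0 →ₗ[R] N}
  {Q : Type} [AddCommGroup Q] [Module R Q]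

lemma H_tensor_zero {i : ℕ} (h : Subsingleton (Hloc J i Q)) (F : Type) [AddCommGroup F]
    [Module R F] [Module.Free R F] [Module.Finite R F] : Subsingleton (Hloc J i (F ⊗[R] Q)) :=
  (theta_bij (J := J) (i := i) (L := F) (Q := Q)).2.subsingleton

lemma tors_tensor (hN : ∃ c, ∀ r ∈ J ^ c, ∀ x : N, r • x = 0) : Tors J (N ⊗[R] Q) := by
  obtain ⟨c, hc⟩ := hN
  intro y
  refine ⟨c, fun r hr => ?_⟩
  induction y with
  | zero => simp
  | add a b ha hb => rw [smul_add, ha, hb, add_zero]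
  | tmul x q => rw [TensorProduct.smul_tmul', hc r hr, TensorProduct.zero_tmul]

lemma ex0 (hex0 : LinearMap.range (d 0) = LinearMap.ker aug) :
    Function.Exact (LinearMap.range (d 0)).subtype aug := by
  intro x
  rw [← LinearMap.mem_ker, ← hex0]
  simp

lemma ex1 (j : ℕ) (hex : LinearMap.range (d (j+1)) = LinearMap.ker (d j)) :
    Function.Exact (LinearMap.range (d (j+1))).subtype (d j).rangeRestrict := by
  intro x
  rw [← LinearMap.mem_ker, LinearMap.ker_rangeRestrict, ← hex]
  simp

lemma P_vanish {t r : ℕ} (hQ : Factors J Q t r)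
    (hN : ∃ c, ∀ r ∈ J ^ c, ∀ x : N, r • x = 0)
    (haug : Function.Surjective aug) (hex0 : LinearMap.range (d 0) = LinearMap.ker aug)
    (hex : ∀ i : ℕ, LinearMap.range (d (i+1)) = LinearMap.ker (d i))
    (c b : ℕ) (hvan : ∀ j, j ≤ b → Subsingleton (Hloc J (c + 1 + j + 1) Q)) :
    ∀ j, j ≤ b → Subsingleton (Hloc J (c + 1 + j + 1) (LinearMap.range (d j) ⊗[R] Q)) := by
  intro j
  induction j with
  | zero =>
    intro hj
    have h1 := q_inj (J := J) ((LinearMap.range (d 0)).subtype.rTensor Q) (aug.rTensor Q)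
      (hQ.ker_tors _ (Submodule.subtype_injective _)) (LinearMap.rTensor_surjective Q haug)
      (rTensor_exact Q (ex0 hex0) haug) (c+1) (Hloc_tors c _ (tors_tensor hN))
    have := H_tensor_zero (hvan 0 hj) (L 0)
    exact h1.subsingleton
  | succ j ih =>
    intro hj
    have h1 := q_inj (J := J) ((LinearMap.range (d (j+1))).subtype.rTensor Q)
      ((d j).rangeRestrict.rTensor Q)
      (hQ.ker_tors _ (Submodule.subtype_injective _))
      (LinearMap.rTensor_surjective Q (LinearMap.surjective_rangeRestrict _))
      (rTensor_exact Q (ex1 j (hex j)) (LinearMap.surjective_rangeRestrict _)) _ (ih (by omega))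
    have := H_tensor_zero (hvan (j+1) hj) (L (j+1))
    exact h1.subsingleton

lemma P_surj {t r : ℕ} (hQ : Factors J Q t r)
    (hex : ∀ i : ℕ, LinearMap.range (d (i+1)) = LinearMap.ker (d i)) (j i : ℕ)
    (h : Subsingleton (Hloc J (i+1) (LinearMap.range (d (j+1)) ⊗[R] Q))) :
    Function.Surjective (Hmap J i ((d j).rangeRestrict.rTensor Q)) :=
  q_surj (J := J) ((LinearMap.range (d (j+1))).subtype.rTensor Q)
      ((d j).rangeRestrict.rTensor Q)
      (hQ.ker_tors _ (Submodule.subtype_injective _))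
      (LinearMap.rTensor_surjective Q (LinearMap.surjective_rangeRestrict _))
      (rTensor_exact Q (ex1 j (hex j)) (LinearMap.surjective_rangeRestrict _)) _ h

lemma rr_comp (j i : ℕ) (z) : Hmap J i ((LinearMap.range (d j)).subtype.rTensor Q)
    (Hmap J i ((d j).rangeRestrict.rTensor Q) z) = Hmap J i ((d j).rTensor Q) z := by
  rw [← Hmap_comp, ← LinearMap.rTensor_comp]
  rfl

/-- case k = 1 -/
lemma tor_zero {t r : ℕ} (hQ : Factors J Q t r)
    (hN : ∃ c, ∀ r ∈ J ^ c, ∀ x : N, r • x = 0)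
    (haug : Function.Surjective aug) (hex0 : LinearMap.range (d 0) = LinearMap.ker aug)
    (hex : ∀ i : ℕ, LinearMap.range (d (i+1)) = LinearMap.ker (d i)) (i : ℕ)
    (h : Subsingleton (Hloc J (i+2) (LinearMap.range (d 1) ⊗[R] Q))) :
    Function.Surjective ((d 0).rTensor (Hloc J (i+1) Q)) := by
  have h1 := P_surj hQ hex 0 (i+1) h
  have h2 := q_exact (J := J) ((LinearMap.range (d 0)).subtype.rTensor Q) (aug.rTensor Q)
      (hQ.ker_tors _ (Submodule.subtype_injective _)) (LinearMap.rTensor_surjective Q haug)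
      (rTensor_exact Q (ex0 hex0) haug) i
  have h3 := Hloc_tors (J := J) i _ (tors_tensor (Q := Q) hN)
  intro y
  obtain ⟨a, ha⟩ := (h2 (theta J (i+1) (L 0) Q y)).1 (Subsingleton.elim _ _)
  obtain ⟨b, rfl⟩ := h1 a
  obtain ⟨w, rfl⟩ := (theta_bij (J := J) (i := i+1) (L := L 1) (Q := Q)).2 b
  rw [rr_comp, theta_nat] at ha
  exact ⟨w, theta_bij.1 ha⟩

/-- case k = j + 2 -/
lemma tor_succ {t r : ℕ} (hQ : Factors J Q t r)
    (hN : ∃ c, ∀ r ∈ J ^ c, ∀ x : N, r • x = 0)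
    (haug : Function.Surjective aug) (hex0 : LinearMap.range (d 0) = LinearMap.ker aug)
    (hex : ∀ i : ℕ, LinearMap.range (d (i+1)) = LinearMap.ker (d i)) (c j : ℕ)
    (hvan : ∀ j', j' + 1 ≤ j → Subsingleton (Hloc J (c + 1 + j' + 1) Q))
    (h : Subsingleton (Hloc J (c + 1 + j + 1 + 1) (LinearMap.range (d (j+2)) ⊗[R] Q))) :
    Function.Exact ((d (j+1)).rTensor (Hloc J (c + 1 + j + 1) Q))
      ((d j).rTensor (Hloc J (c + 1 + j + 1) Q)) := by
  have h1 := P_surj hQ hex (j+1) _ h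
  have h2 := q_exact (J := J) ((LinearMap.range (d (j+1))).subtype.rTensor Q)
      ((d j).rangeRestrict.rTensor Q)
      (hQ.ker_tors _ (Submodule.subtype_injective _))
      (LinearMap.rTensor_surjective Q (LinearMap.surjective_rangeRestrict _))
      (rTensor_exact Q (ex1 j (hex j)) (LinearMap.surjective_rangeRestrict _)) (c + 1 + j)
  have h3 : Function.Injective (Hmap J (c + 1 + j + 1) ((LinearMap.range (d j)).subtype.rTensor Q)) := by
    cases j with
    | zero =>
      exact q_inj (J := J) ((LinearMap.range (d 0)).subtype.rTensor Q) (aug.rTensor Q)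
        (hQ.ker_tors _ (Submodule.subtype_injective _)) (LinearMap.rTensor_surjective Q haug)
        (rTensor_exact Q (ex0 hex0) haug) (c+1) (Hloc_tors c _ (tors_tensor hN))
    | succ j =>
      exact q_inj (J := J) ((LinearMap.range (d (j+1))).subtype.rTensor Q)
        ((d j).rangeRestrict.rTensor Q)
        (hQ.ker_tors _ (Submodule.subtype_injective _))
        (LinearMap.rTensor_surjective Q (LinearMap.surjective_rangeRestrict _))
        (rTensor_exact Q (ex1 j (hex j)) (LinearMap.surjective_rangeRestrict _)) _
        (P_vanish hQ hN haug hex0 hex c j (fun j' hj' => hvan j' (by omega)) j le_rfl)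
  intro y
  constructor
  · intro hy
    have e1 : Hmap J (c + 1 + j + 1) ((d j).rTensor Q) (theta J _ _ Q y) = 0 := by
      rw [theta_nat, hy, map_zero]
    rw [← rr_comp] at e1
    have e2 := h3 (e1.trans (map_zero _).symm)
    obtain ⟨a, ha⟩ := (h2 _).1 e2
    obtain ⟨b, rfl⟩ := h1 a
    obtain ⟨w, rfl⟩ := (theta_bij (J := J) (L := L (j+1+1)) (Q := Q)).2 b
    rw [rr_comp, theta_nat] at ha
    exact ⟨w, theta_bij.1 ha⟩
  · rintro ⟨w, rfl⟩
    rw [← LinearMap.comp_apply, ← LinearMap.rTensor_comp]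
    have : d j ∘ₗ d (j+1) = 0 := by
      ext x
      have : d (j+1) x ∈ LinearMap.ker (d j) := by rw [← hex]; exact ⟨x, rfl⟩
      exact this
    rw [this]; simp
end D
end Jy

namespace Jy

section E
open Polynomial
variable {S : Type} [CommRing S]

def DM (_ : S →+* S[X]) (M : Type) [AddCommGroup M] [Module S M] : Type := PolynomialModule S M

variable (ρ : S →+* S[X]) (M : Type) [AddCommGroup M] [Module S M]

instance : AddCommGroup (DM ρ M) := inferInstanceAs (AddCommGroup (PolynomialModule S M))
instance : Module S (DM ρ M) := Module.compHom (PolynomialModule S M) ρ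

def toPM (x : DM ρ M) : PolynomialModule S M := x
variable {ρ M}
lemma DM_smul (s : S) (x : DM ρ M) : toPM ρ M (s • x) = ρ s • toPM ρ M x := rfl

variable (ρ M)
def mulBy (g : S[X]) : DM ρ M →ₗ[S] DM ρ M where
  toFun x := (g • toPM ρ M x : PolynomialModule S M)
  map_add' x y := smul_add g (toPM ρ M x) (toPM ρ M y)
  map_smul' s x := smul_comm g (ρ s) (toPM ρ M x)

lemma mulBy_apply (g : S[X]) (x : DM ρ M) : toPM ρ M (mulBy ρ M g x) = g • toPM ρ M x := rfl

lemma mulBy_pow (g : S[X]) (e : ℕ) : (mulBy ρ M g) ^ e = mulBy ρ M (g ^ e) := by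
  induction e with
  | zero => ext x; exact (one_smul S[X] (toPM ρ M x)).symm
  | succ e ih =>
    rw [pow_succ, ih]
    ext x
    rw [pow_succ]
    exact smul_smul (g ^ e) g (toPM ρ M x)

variable {M}
lemma C_kill {s : S} (hs : ∀ m : M, s • m = 0) (x : PolynomialModule S M) : (C s) • x = 0 := by
  induction x using PolynomialModule.induction_linear with
  | zero => simp
  | add x y hx hy => rw [smul_add, hx, hy, add_zero]
  | single n m =>
    rw [← monomial_zero_left, PolynomialModule.monomial_smul_single, hs, PolynomialModule.single_zero]

lemma X_smul_coeff (x : PolynomialModule S M) (i : ℕ) :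
    ((X : S[X]) • x).coeff (i+1) = x.coeff i := by
  induction x using PolynomialModule.induction_linear with
  | zero => simp
  | add x y hx hy => rw [smul_add, PolynomialModule.coeff_add, PolynomialModule.coeff_add,
      Finsupp.add_apply, Finsupp.add_apply, hx, hy]
  | single n m =>
    rw [← monomial_one_one_eq_X, PolynomialModule.monomial_smul_single]
    simp [Finsupp.single_apply, add_comm 1]

lemma X_smul_zero (x : PolynomialModule S M) (h : (X : S[X]) • x = 0) : x = 0 := by
  ext i
  rw [← X_smul_coeff, h]; simp

lemma X_pow_smul_zero (e : ℕ) (x : PolynomialModule S M) (h : (X : S[X]) ^ e • x = 0) : x = 0 := by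
  induction e with
  | zero => simpa using h
  | succ e ih => exact ih (X_smul_zero _ (by rw [smul_smul, ← pow_succ', h]))

lemma sub_inj {s : S} {e : ℕ} (hs : ∀ m : M, s ^ e • m = 0) (x : PolynomialModule S M)
    (h : (X - C s) • x = 0) : x = 0 := by
  apply X_pow_smul_zero e
  obtain ⟨g, hg⟩ := sub_dvd_pow_sub_pow (X : S[X]) (C s) e
  rw [eq_add_of_sub_eq hg, add_smul, mul_comm, mul_smul, h, smul_zero, ← C_pow, C_kill hs, add_zero]

lemma decomp (s : S) (x : PolynomialModule S M) :
    ∃ y, x = PolynomialModule.single S 0 (PolynomialModule.eval s x) + (X - C s) • y := by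
  induction x using PolynomialModule.induction_linear with
  | zero => exact ⟨0, by simp⟩
  | add x y hx hy =>
    obtain ⟨a, ha⟩ := hx
    obtain ⟨b, hb⟩ := hy
    refine ⟨a + b, ?_⟩
    rw [map_add, PolynomialModule.single_add, smul_add]
    nth_rewrite 1 [ha, hb]
    abel
  | single n m =>
    obtain ⟨g, hg⟩ := sub_dvd_pow_sub_pow (X : S[X]) (C s) n
    refine ⟨g • PolynomialModule.single S 0 m, ?_⟩
    rw [smul_smul, ← hg, sub_smul, ← C_pow, ← monomial_zero_left, X_pow_eq_monomial,
      PolynomialModule.monomial_smul_single, PolynomialModule.monomial_smul_single,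
      PolynomialModule.eval_single]
    simp

variable {ρ}
def evD (s : S) (hρ : ∀ a, (ρ a).eval s = a) : DM ρ M →ₗ[S] M where
  toFun x := PolynomialModule.eval s (toPM ρ M x)
  map_add' x y := map_add (PolynomialModule.eval s) (toPM ρ M x) (toPM ρ M y)
  map_smul' a x := by
    rw [DM_smul, PolynomialModule.eval_smul, hρ]; rfl

lemma DM_main {s : S} (hρ : ∀ a, (ρ a).eval s = a) (hs : ρ s = X) {e : ℕ}
    (he : ∀ m : M, s ^ e • m = 0) :
    ∃ (φ a : DM ρ M →ₗ[S] DM ρ M) (p : DM ρ M →ₗ[S] M), Function.Injective φ ∧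
      Function.Surjective p ∧ Function.Exact φ p ∧ φ = s • LinearMap.id - a ∧ a ^ e = 0 := by
  refine ⟨mulBy ρ M (X - C s), mulBy ρ M (C s), evD s hρ, ?_, ?_, ?_, ?_, ?_⟩
  · rw [injective_iff_map_eq_zero]
    intro x hx
    exact sub_inj he x hx
  · intro m
    refine ⟨PolynomialModule.single S 0 m, ?_⟩
    exact (PolynomialModule.eval_single s 0 m).trans (by simp)
  · intro x
    constructor
    · intro h
      obtain ⟨y, hy⟩ := decomp s (toPM ρ M x)
      refine ⟨y, ?_⟩
      have h' : PolynomialModule.eval s (toPM ρ M x) = 0 := h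
      rw [h'] at hy
      simp only [PolynomialModule.single_zero, zero_add] at hy
      exact hy.symm
    · rintro ⟨y, rfl⟩
      change PolynomialModule.eval s ((X - C s) • toPM ρ M y) = 0
      rw [PolynomialModule.eval_smul]; simp
  · ext x
    change (X - C s) • toPM ρ M x = ρ s • toPM ρ M x - C s • toPM ρ M x
    rw [hs, sub_smul]
  · rw [mulBy_pow]
    ext x
    change (C s ^ e) • toPM ρ M x = 0
    rw [← C_pow, C_kill he]
end E

section
variable {K : Type} [Field K] {n : ℕ}
def rho (r : Fin (n+1)) : PolyS K n →ₐ[K] Polynomial (PolyS K n) :=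
  MvPolynomial.aeval (fun j => if j = r then Polynomial.X else Polynomial.C (MvPolynomial.X j))

lemma exists_D (M : Type) [AddCommGroup M] [Module (PolyS K n) M] (r : Fin (n+1)) {e : ℕ}
    (he : ∀ m : M, (MvPolynomial.X r : PolyS K n) ^ e • m = 0) :
    ∃ (D : Type) (_ : AddCommGroup D) (_ : Module (PolyS K n) D)
      (φ a : D →ₗ[PolyS K n] D) (p : D →ₗ[PolyS K n] M), Function.Injective φ ∧
      Function.Surjective p ∧ Function.Exact φ p ∧
      φ = (MvPolynomial.X r : PolyS K n) • LinearMap.id - a ∧ a ^ e = 0 ∧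
      ∀ j ≠ r, ∀ e', (∀ m : M, (MvPolynomial.X j : PolyS K n) ^ e' • m = 0) →
        ∀ x : D, (MvPolynomial.X j : PolyS K n) ^ e' • x = 0 := by
  have h1 : ∀ a : PolyS K n, Polynomial.eval (MvPolynomial.X r) (rho r a) = a := by
    intro a
    induction a using MvPolynomial.induction_on with
    | C c =>
      rw [← MvPolynomial.algebraMap_eq, AlgHom.commutes]
      simp [Polynomial.algebraMap_apply]
    | add p q hp hq => simp [hp, hq]
    | mul_X p j hp =>
      rw [map_mul, Polynomial.eval_mul, hp]
      by_cases hj : j = r <;> simp [rho, hj]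
  obtain ⟨φ, a, p, h⟩ := DM_main (ρ := (rho r : PolyS K n →ₐ[K] _).toRingHom) (M := M) h1
    (by simp [rho]) he
  refine ⟨_, _, _, φ, a, p, h.1, h.2.1, h.2.2.1, h.2.2.2.1, h.2.2.2.2, ?_⟩
  intro j hj e' he' x
  change (rho r ((MvPolynomial.X j : PolyS K n) ^ e')) • toPM _ M x = 0
  have : rho r (MvPolynomial.X j ^ e' : PolyS K n) = Polynomial.C (MvPolynomial.X j ^ e') := by
    simp [rho, hj]
  rw [this, C_kill he']
end
end Jy

namespace Jy

section F
variable {R : Type} [CommRing R]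
  {L : ℕ → Type} [∀ i, AddCommGroup (L i)] [∀ i, Module R (L i)]

def Zc (d : ∀ i : ℕ, L (i+1) →ₗ[R] L i) (M : Type) [AddCommGroup M] [Module R M] :
    ∀ j : ℕ, Submodule R (L j ⊗[R] M)
  | 0 => ⊤
  | j+1 => LinearMap.ker ((d j).rTensor M)

def Bc (d : ∀ i : ℕ, L (i+1) →ₗ[R] L i) (M : Type) [AddCommGroup M] [Module R M] (j : ℕ) :
    Submodule R (L j ⊗[R] M) := LinearMap.range ((d j).rTensor M)

variable {d : ∀ i : ℕ, L (i+1) →ₗ[R] L i}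
variable {M D D' : Type} [AddCommGroup M] [Module R M] [AddCommGroup D] [Module R D]
  [AddCommGroup D'] [Module R D']

lemma comm_d (j : ℕ) (u : D →ₗ[R] D') (z : L (j+1) ⊗[R] D) :
    (d j).rTensor D' (u.lTensor _ z) = u.lTensor _ ((d j).rTensor D z) := by
  rw [← LinearMap.comp_apply, ← LinearMap.comp_apply, LinearMap.rTensor_comp_lTensor,
    LinearMap.lTensor_comp_rTensor]

lemma Zc_map (j : ℕ) (u : D →ₗ[R] D') {z : L j ⊗[R] D} (hz : z ∈ Zc d D j) :
    u.lTensor _ z ∈ Zc d D' j := by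
  cases j with
  | zero => trivial
  | succ j =>
    change (d j).rTensor D' (u.lTensor _ z) = 0
    have hz' : (d j).rTensor D z = 0 := hz
    rw [comm_d, hz', map_zero]

lemma Bc_map (j : ℕ) (u : D →ₗ[R] D') {z : L j ⊗[R] D} (hz : z ∈ Bc d D j) :
    u.lTensor _ z ∈ Bc d D' j := by
  obtain ⟨w, rfl⟩ := hz
  exact ⟨u.lTensor _ w, comm_d j u w⟩

lemma lift_range {A B C : Type} [AddCommGroup A] [Module R A] [AddCommGroup B] [Module R B]
    [AddCommGroup C] [Module R C] [Module.Projective R A] (f : B →ₗ[R] C) (g : A →ₗ[R] C)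
    (h : ∀ x, g x ∈ LinearMap.range f) : ∃ u : A →ₗ[R] B, f ∘ₗ u = g := by
  obtain ⟨u, hu⟩ := Module.projective_lifting_property f.rangeRestrict (g.codRestrict _ h)
    (LinearMap.surjective_rangeRestrict f)
  refine ⟨u, ?_⟩
  ext x
  exact congrArg Subtype.val (congr($hu x))

section
variable {N : Type} [AddCommGroup N] [Module R N] {aug : L 0 →ₗ[R] N}
  [∀ i, Module.Free R (L i)]

lemma htpy (hex0 : LinearMap.range (d 0) = LinearMap.ker aug)
    (hex : ∀ i : ℕ, LinearMap.range (d (i+1)) = LinearMap.ker (d i))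
    {s : R} (hs : ∀ x : N, s • x = 0) :
    (∃ h : L 0 →ₗ[R] L 1, d 0 ∘ₗ h = s • LinearMap.id) ∧
    ∀ j, ∃ (h : L (j+1) →ₗ[R] L (j+2)) (g : L j →ₗ[R] L (j+1)),
      d (j+1) ∘ₗ h + g ∘ₗ d j = s • LinearMap.id := by
  have h0 : ∃ h : L 0 →ₗ[R] L 1, d 0 ∘ₗ h = s • LinearMap.id := by
    apply lift_range
    intro x
    rw [hex0]
    simp [hs]
  refine ⟨h0, fun j => ?_⟩
  induction j with
  | zero =>
    obtain ⟨h, hh⟩ := h0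
    obtain ⟨u, hu⟩ := lift_range (d 1) (s • LinearMap.id - h ∘ₗ d 0) (by
      intro x
      rw [hex, LinearMap.mem_ker]
      have := congr($hh (d 0 x))
      simp only [LinearMap.comp_apply, LinearMap.smul_apply, LinearMap.id_apply] at this
      simp [this])
    exact ⟨u, h, by rw [hu]; abel⟩
  | succ j ih =>
    obtain ⟨h, g, hh⟩ := ih
    obtain ⟨u, hu⟩ := lift_range (d (j+2)) (s • LinearMap.id - h ∘ₗ d (j+1)) (by
      intro x
      rw [hex, LinearMap.mem_ker]
      have := congr($hh (d (j+1) x))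
      have h3 : d j (d (j+1) x) = 0 := by
        rw [← LinearMap.mem_ker, ← hex]; exact ⟨x, rfl⟩
      simp only [LinearMap.comp_apply, LinearMap.add_apply, h3, map_zero, add_zero,
        LinearMap.smul_apply, LinearMap.id_apply] at this
      simp [this])
    exact ⟨u, h, by rw [hu]; abel⟩

lemma kill_Z (hex0 : LinearMap.range (d 0) = LinearMap.ker aug)
    (hex : ∀ i : ℕ, LinearMap.range (d (i+1)) = LinearMap.ker (d i))
    {s : R} (hs : ∀ x : N, s • x = 0) (j : ℕ) {z : L j ⊗[R] D} (hz : z ∈ Zc d D j) :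
    s • z ∈ Bc d D j := by
  obtain ⟨h0, h1⟩ := htpy hex0 hex hs
  cases j with
  | zero =>
    obtain ⟨h, hh⟩ := h0
    refine ⟨h.rTensor D z, ?_⟩
    rw [← LinearMap.comp_apply, ← LinearMap.rTensor_comp, hh, LinearMap.rTensor_smul]
    simp
  | succ j =>
    obtain ⟨h, g, hh⟩ := h1 j
    refine ⟨h.rTensor D z, ?_⟩
    have hz' : (d j).rTensor D z = 0 := hz
    have e : (d (j+1) ∘ₗ h + g ∘ₗ d j).rTensor D z = s • z := by
      rw [hh, LinearMap.rTensor_smul]; simp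
    rw [LinearMap.rTensor_add, LinearMap.add_apply, LinearMap.rTensor_comp, LinearMap.rTensor_comp,
      LinearMap.comp_apply, LinearMap.comp_apply, hz', map_zero, add_zero] at e
    exact e

/-- nilpotency on homology -/
lemma nilp (hex0 : LinearMap.range (d 0) = LinearMap.ker aug)
    (hex : ∀ i : ℕ, LinearMap.range (d (i+1)) = LinearMap.ker (d i))
    {s : R} {c e : ℕ} (hs : ∀ x : N, s ^ c • x = 0) {φ a : D →ₗ[R] D}
    (hφ : φ = s • LinearMap.id - a) (ha : a ^ e = 0) (j : ℕ) {z : L j ⊗[R] D}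
    (hz : z ∈ Zc d D j) : (φ ^ (c + e)).lTensor _ z ∈ Bc d D j := by
  have h1 : (Polynomial.C s - Polynomial.X : Polynomial R) ^ (c + e) ∈
      Ideal.span {Polynomial.C s ^ c, Polynomial.X ^ e} := by
    rw [sub_eq_add_neg]
    refine Ideal.add_pow_mem_of_pow_mem_of_le (m := c) (n := e) _
      (Ideal.subset_span (by simp)) ?_ (by omega)
    rw [neg_pow]
    exact Ideal.mul_mem_left _ _ (Ideal.subset_span (by simp))
  obtain ⟨u, v, huv⟩ := Ideal.mem_span_pair.1 h1
  have h2 : φ ^ (c + e) = s ^ c • Polynomial.aeval a u := by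
    have := congrArg (Polynomial.aeval a) huv
    simp only [map_add, map_mul, map_pow, map_sub, Polynomial.aeval_C, Polynomial.aeval_X, ha,
      mul_zero, add_zero] at this
    have h3 : φ = algebraMap R (Module.End R D) s - a := by
      rw [hφ]; rfl
    rw [h3, ← this, ← map_pow, ← Algebra.commutes, ← Algebra.smul_def]
  rw [h2, LinearMap.lTensor_smul, LinearMap.smul_apply]
  exact kill_Z hex0 hex hs j (Zc_map j _ hz)
end

section
variable [∀ i, Module.Free R (L i)]
variable {φ : D →ₗ[R] D} {p : D →ₗ[R] M}

lemma lT_inj (hφ : Function.Injective φ) (j : ℕ) : Function.Injective (φ.lTensor (L j)) :=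
  Module.Flat.lTensor_preserves_injective_linearMap φ hφ

lemma claimA (hφ : Function.Injective φ) (hp : Function.Surjective p) (hex : Function.Exact φ p)
    (hdd : ∀ j, d j ∘ₗ d (j+1) = 0)
    (j : ℕ) (hE : Zc d M j ≤ Bc d M j) {z : L j ⊗[R] D} (hz : z ∈ Zc d D j) :
    ∃ z' ∈ Zc d D j, z - φ.lTensor _ z' ∈ Bc d D j := by
  obtain ⟨w, hw⟩ := hE (Zc_map j p hz)
  obtain ⟨w, rfl⟩ := LinearMap.lTensor_surjective (L (j+1)) hp w
  rw [comm_d] at hw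
  have h1 : p.lTensor _ (z - (d j).rTensor D w) = 0 := by rw [map_sub, hw, sub_self]
  obtain ⟨y, hy⟩ := (lTensor_exact (L j) hex hp _).1 h1
  refine ⟨y, ?_, ⟨w, by rw [hy]; abel⟩⟩
  cases j with
  | zero => trivial
  | succ j =>
    apply lT_inj hφ j
    rw [← comm_d, hy, map_sub, map_zero]
    have hz' : (d j).rTensor D z = 0 := hz
    rw [hz', ← LinearMap.comp_apply, ← LinearMap.rTensor_comp, hdd]
    simp

lemma claimB (hφ : Function.Injective φ) (hp : Function.Surjective p) (hex : Function.Exact φ p)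
    (hdd : ∀ j, d j ∘ₗ d (j+1) = 0)
    (j : ℕ) (hE : Zc d M (j+1) ≤ Bc d M (j+1)) {z : L j ⊗[R] D}
    (hz : φ.lTensor _ z ∈ Bc d D j) : z ∈ Bc d D j := by
  obtain ⟨w, hw⟩ := hz
  have h1 : p.lTensor _ w ∈ Zc d M (j+1) := by
    change (d j).rTensor M _ = 0
    rw [comm_d, hw]
    exact (lTensor_exact (L j) hex hp _).2 ⟨z, rfl⟩
  obtain ⟨v, hv⟩ := hE h1
  obtain ⟨v, rfl⟩ := LinearMap.lTensor_surjective (L (j+1+1)) hp v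
  rw [comm_d] at hv
  have h2 : p.lTensor _ (w - (d (j+1)).rTensor D v) = 0 := by rw [map_sub, hv, sub_self]
  obtain ⟨u, hu⟩ := (lTensor_exact (L (j+1)) hex hp _).1 h2
  refine ⟨u, lT_inj hφ j ?_⟩
  rw [← comm_d, hu, map_sub, hw, ← LinearMap.comp_apply, ← LinearMap.rTensor_comp, hdd]
  simp

lemma E_same (hφ : Function.Injective φ) (hp : Function.Surjective p) (hex : Function.Exact φ p)
    (hdd : ∀ j, d j ∘ₗ d (j+1) = 0) (j m : ℕ)
    (hn : ∀ z ∈ Zc d D j, (φ ^ m).lTensor _ z ∈ Bc d D j)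
    (hE : Zc d M j ≤ Bc d M j) : Zc d D j ≤ Bc d D j := by
  have key : ∀ m, ∀ z ∈ Zc d D j, ∃ z' ∈ Zc d D j, z - (φ ^ m).lTensor _ z' ∈ Bc d D j := by
    intro m
    induction m with
    | zero =>
      intro z hz
      refine ⟨z, hz, ?_⟩
      have : (φ ^ 0).lTensor (L j) z = z := by
        rw [pow_zero]; exact LinearMap.lTensor_id_apply _ _ _
      rw [this, sub_self]
      exact zero_mem _
    | succ m ih =>
      intro z hz
      obtain ⟨z1, h1, h2⟩ := ih z hz
      obtain ⟨z2, h3, h4⟩ := claimA hφ hp hex hdd j hE h1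
      refine ⟨z2, h3, ?_⟩
      have h5 := Bc_map j (φ ^ m) h4
      rw [map_sub, ← LinearMap.comp_apply, ← LinearMap.lTensor_comp] at h5
      have := add_mem h2 h5
      rw [sub_add_sub_cancel] at this
      rw [pow_succ]
      exact this
  intro z hz
  obtain ⟨z', h1, h2⟩ := key m z hz
  have := add_mem h2 (hn z' h1)
  rwa [sub_add_cancel] at this

lemma E_pred (hφ : Function.Injective φ) (hp : Function.Surjective p) (hex : Function.Exact φ p)
    (hdd : ∀ j, d j ∘ₗ d (j+1) = 0) (j m : ℕ)
    (hn : ∀ z ∈ Zc d D j, (φ ^ m).lTensor _ z ∈ Bc d D j)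
    (hE : Zc d M (j+1) ≤ Bc d M (j+1)) : Zc d D j ≤ Bc d D j := by
  intro z hz
  have h := hn z hz
  clear hn
  induction m with
  | zero =>
    rw [pow_zero] at h
    have e : (1 : D →ₗ[R] D).lTensor (L j) z = z := LinearMap.lTensor_id_apply _ _ _
    rwa [e] at h
  | succ m ih =>
    apply ih
    apply claimB hφ hp hex hdd j hE
    rw [pow_succ'] at h
    rw [← LinearMap.comp_apply, ← LinearMap.lTensor_comp]
    exact h
end
end F

section G
variable {K : Type} [Field K] {n : ℕ}
  {L : ℕ → Type} [∀ i, AddCommGroup (L i)] [∀ i, Module (PolyS K n) (L i)]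
  [∀ i, Module.Free (PolyS K n) (L i)]
  {d : ∀ i : ℕ, L (i+1) →ₗ[PolyS K n] L i}
  {N : Type} [AddCommGroup N] [Module (PolyS K n) N] {aug : L 0 →ₗ[PolyS K n] N}

lemma tor_ne (haug : Function.Surjective aug)
    (hex0 : LinearMap.range (d 0) = LinearMap.ker aug)
    (hex : ∀ i : ℕ, LinearMap.range (d (i+1)) = LinearMap.ker (d i))
    {c : ℕ} (hc : ∀ (i : Fin (n+1)) (x : N), (MvPolynomial.X i : PolyS K n) ^ c • x = 0)
    (r : ℕ) (hr : r ≤ n + 1) :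
    ∀ (M : Type) [AddCommGroup M] [Module (PolyS K n) M],
      Nontrivial (N ⊗[PolyS K n] M) → ∀ e,
      (∀ i : Fin (n+1), i.1 < r → ∀ m : M, (MvPolynomial.X i : PolyS K n) ^ e • m = 0) →
      ∀ j ≤ r, ¬ (Zc d M j ≤ Bc d M j) := by
  have hdd : ∀ j, d j ∘ₗ d (j+1) = 0 := by
    intro j
    ext x
    have : d (j+1) x ∈ LinearMap.ker (d j) := by rw [← hex]; exact ⟨x, rfl⟩
    exact this
  induction r with
  | zero =>
    intro M _ _ hNM e _ j hj hE
    obtain rfl : j = 0 := by omega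
    obtain ⟨y, hy⟩ := exists_ne (0 : N ⊗[PolyS K n] M)
    obtain ⟨w, rfl⟩ := LinearMap.rTensor_surjective M haug y
    obtain ⟨v, rfl⟩ := hE (show w ∈ Zc d M 0 from trivial)
    apply hy
    have : aug ∘ₗ d 0 = 0 := by
      ext x
      have : d 0 x ∈ LinearMap.ker aug := by rw [← hex0]; exact ⟨x, rfl⟩
      exact this
    rw [← LinearMap.comp_apply, ← LinearMap.rTensor_comp, this]
    simp
  | succ r ih =>
    intro M _ _ hNM e he j hj hE
    obtain ⟨D, _, _, φ, a, p, h1, h2, h3, h4, h5, h6⟩ :=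
      exists_D M (⟨r, by omega⟩ : Fin (n+1)) (he _ (Nat.lt_succ_self r))
    have hND : Nontrivial (N ⊗[PolyS K n] D) :=
      (LinearMap.lTensor_surjective N h2).nontrivial
    have hD : ∀ i : Fin (n+1), i.1 < r → ∀ x : D, (MvPolynomial.X i : PolyS K n) ^ e • x = 0 := by
      intro i hi
      exact h6 i (by rintro rfl; exact lt_irrefl _ hi) e (he i (by omega))
    have hn : ∀ j, ∀ z ∈ Zc d D j, (φ ^ (c + e)).lTensor _ z ∈ Bc d D j :=
      fun j z hz => nilp hex0 hex (hc _) h4 h5 j hz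
    by_cases hjr : j ≤ r
    · exact ih (by omega) D hND e hD j hjr (E_same h1 h2 h3 hdd j _ (hn j) hE)
    · obtain rfl : j = r + 1 := by omega
      exact ih (by omega) D hND e hD r le_rfl (E_pred h1 h2 h3 hdd r _ (hn r) hE)
end G

section Hh
variable {R : Type} [CommRing R] (J : Ideal R) [hJ : J.IsMaximal]

lemma exists_functional (N : Type) [AddCommGroup N] [Module R N] [Nontrivial N] {c : ℕ}
    (hc : ∀ r ∈ J ^ c, ∀ x : N, r • x = 0) :
    ∃ (f : N →ₗ[R] (R ⧸ J)) (x : N), f x ≠ 0 := by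
  have hne : (J • ⊤ : Submodule R N) ≠ ⊤ := by
    intro h
    have h2 : ∀ k, (J ^ k • ⊤ : Submodule R N) = ⊤ := by
      intro k
      induction k with
      | zero => simp
      | succ k ih => rw [pow_succ, Submodule.mul_smul, h, ih]
    have h3 : (J ^ c • ⊤ : Submodule R N) ≤ ⊥ := by
      rw [Submodule.smul_le]
      intro r hr x _
      exact (Submodule.mem_bot R).2 (hc r hr x)
    rw [h2 c] at h3
    obtain ⟨x, hx⟩ := exists_ne (0 : N)
    exact hx ((Submodule.mem_bot R).1 (h3 (Submodule.mem_top (x := x))))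
  obtain ⟨x, -, hx⟩ := SetLike.exists_of_lt (lt_top_iff_ne_top.2 hne)
  letI := Ideal.Quotient.field J
  have hx' : (Submodule.Quotient.mk x : N ⧸ (J • ⊤ : Submodule R N)) ≠ 0 := by
    rwa [Ne, Submodule.Quotient.mk_eq_zero]
  obtain ⟨g, hg⟩ : ∃ g : Module.Dual (R ⧸ J) (N ⧸ (J • ⊤ : Submodule R N)),
      g (Submodule.Quotient.mk x) ≠ 0 := by
    by_contra! hcon
    exact hx' ((Module.forall_dual_apply_eq_zero_iff (R ⧸ J) _).1 hcon)
  exact ⟨(g.restrictScalars R) ∘ₗ Submodule.mkQ _, x, hg⟩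

lemma tensor_nontrivial (N M : Type) [AddCommGroup N] [Module R N] [Nontrivial N]
    [AddCommGroup M] [Module R M] [Nontrivial M] {c e : ℕ}
    (hc : ∀ r ∈ J ^ c, ∀ x : N, r • x = 0) (he : ∀ r ∈ J ^ e, ∀ x : M, r • x = 0) :
    Nontrivial (N ⊗[R] M) := by
  obtain ⟨f, x, hx⟩ := exists_functional J N hc
  obtain ⟨g, y, hy⟩ := exists_functional J M he
  refine ⟨x ⊗ₜ y, 0, fun h => ?_⟩
  have h2 := congrArg (LinearMap.mul' R (R ⧸ J) ∘ₗ TensorProduct.map f g) h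
  rw [map_zero] at h2
  simp only [LinearMap.comp_apply, TensorProduct.map_tmul, LinearMap.mul'_apply] at h2
  rcases mul_eq_zero.1 h2 with h | h
  · exact hx h
  · exact hy h
end Hh

lemma irrel_isMaximal (K : Type) [Field K] (n : ℕ) : (irrel K n).IsMaximal := by
  have : irrel K n = RingHom.ker (MvPolynomial.constantCoeff : PolyS K n →+* K) := by
    apply le_antisymm
    · rw [irrel, Ideal.span_le]
      rintro _ ⟨i, rfl⟩
      simp
    · intro p hp
      rw [irrel, ← Set.image_univ, MvPolynomial.mem_ideal_span_X_image]
      intro m hm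
      by_contra! hcon
      have : m = 0 := by ext i; simpa using hcon i
      subst this
      rw [MvPolynomial.mem_support_iff] at hm
      exact hm hp
  rw [this]
  exact RingHom.ker_isMaximal_of_surjective _ (fun k => ⟨MvPolynomial.C k, by simp⟩)
end Jy


/-- Jyotilingam-type nonvanishing.  Let `N` be a (nonzero) finite
length graded `S`-module with `k`-th syzygy bundle `P_k` on `ℙⁿ`, `k ≥ 1`.  Let `Q` be
a vector bundle on `ℙⁿ` with `H^l_*(Q) = M ≠ 0` for some `k ≤ l ≤ n-2` and
`H^i_*(Q) = 0` for `i = l-1, l-2, …, l-k+2`.  Then `H^{l+1}_*(P_k ⊗ Q) ≠ 0`. -/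
theorem jyotilingam_nonvanishing
    (K : Type) [Field K] (n : ℕ)
    (N : Type) [AddCommGroup N] [Module (PolyS K n) N]
    (hN : Nontrivial N)
    (hNfl : IsGradedFiniteLength K n N)
    (res : MinimalResolution K n N)
    (k : ℕ) (hk : 1 ≤ k)
    (Q : Type) [AddCommGroup Q] [Module (PolyS K n) Q]
    (hQ : IsBundleModule K n Q)
    (l : ℕ) (hkl : k ≤ l) (hl : l ≤ n - 2)
    (hM : ¬ Subsingleton (Hstar K n l Q))
    (hvan : ∀ i : ℕ, l - k + 2 ≤ i → i ≤ l - 1 → Subsingleton (Hstar K n i Q)) :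
    ¬ Subsingleton (Hstar K n (l+1)
      (TensorProduct (PolyS K n) ↥(LinearMap.range (res.d k)) Q)) := by
  intro hsub
  have hsub' : Subsingleton (Jy.Hloc (irrel K n) (l+1+1)
      (TensorProduct (PolyS K n) ↥(LinearMap.range (res.d k)) Q)) := Jy.Hloc_bridge.1 hsub
  haveI := res.free
  haveI := res.finite
  haveI := hQ.finite
  haveI := Jy.irrel_isMaximal K n
  obtain ⟨t, r, hfac⟩ := Jy.exists_factors (irrel K n) Q hQ.locFree
  obtain ⟨c0, hc0⟩ := hNfl.2
  have hc : ∀ r ∈ irrel K n ^ c0, ∀ x : N, r • x = 0 := fun r hr x =>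
    Module.mem_annihilator.1 (hc0 hr) x
  have hX : ∀ i : Fin (n+1), (MvPolynomial.X i : PolyS K n) ∈ irrel K n := fun i =>
    Ideal.subset_span ⟨i, rfl⟩
  have hMn : Nontrivial (Jy.Hloc (irrel K n) (l+1) Q) := by
    rw [← not_subsingleton_iff_nontrivial]
    exact fun h => hM (Jy.Hloc_bridge.2 h)
  have hkill := hfac.H_kill (Jy.H_poly K n (l+1) (by omega))
  have hNM := Jy.tensor_nontrivial (irrel K n) N (Jy.Hloc (irrel K n) (l+1) Q) hc hkill
  have key := Jy.tor_ne res.aug_surjective res.exact0 res.exact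
    (fun i x => hc _ (Ideal.pow_mem_pow (hX i) c0) x) (n+1) le_rfl
    (Jy.Hloc (irrel K n) (l+1) Q) hNM t
    (fun i _ m => hkill _ (Ideal.pow_mem_pow (hX i) t) m)
  obtain _ | _ | j := k
  · omega
  · have hs := Jy.tor_zero hfac ⟨c0, hc⟩ res.aug_surjective res.exact0 res.exact l hsub'
    refine key 0 (by omega) fun x _ => hs x
  · obtain ⟨c, rfl⟩ : ∃ c, l = c + 1 + j := ⟨l - 1 - j, by omega⟩
    have hs := Jy.tor_succ hfac ⟨c0, hc⟩ res.aug_surjective res.exact0 res.exact c j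
      (fun j' hj' => Jy.Hloc_bridge.1 (hvan (c+1+j') (by omega) (by omega))) hsub'
    refine key (j+1) (by omega) fun x hx => (hs x).1 hx
end
end

section
/- In the setting of Jyotilingam's theorem with k = 1: if N is a finite length graded S-module with first syzygy bundle P_1 and Q is a bundle on P^n with M = H^l_*(Q) ≠ 0, 1 ≤ l ≤ n-2, then the map L_1 ⊗ M → L_0 ⊗ M induced by the resolution of N is not surjective, and hence H^{l+1}_*(P_1 ⊗ Q) ≠ 0. -/
/-!
Background setup (the paper works on projective space `ℙⁿ` over a field `K`):
we encode a coherent sheaf on `ℙⁿ_K` by a module `M` over the homogeneous coordinate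
ring `S = K[X₀,…,Xₙ]` (namely `M = Γ_*` of the sheaf), and the intermediate cohomology
module `H^i_*(F) = ⊕_ν H^i(ℙⁿ, F(ν))` (for `i ≥ 1`) by the local cohomology module
`H^{i+1}_𝔪(M)` at the irrelevant maximal ideal `𝔪 = (X₀,…,Xₙ)`, to which it is
canonically isomorphic.
-/

open CategoryTheory TensorProduct

noncomputable section

variable (K : Type) [Field K] (n : ℕ)

section
namespace LC
open Opposite Limits
universe u
variable {R : Type u} [CommRing R]

abbrev Gf (M : ModuleCat.{u} R) : ModuleCat.{u} R ⥤ (ModuleCat.{u} R)ᵒᵖ :=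
  ((linearYoneda R (ModuleCat.{u} R)).obj M).rightOp

section generic
variable {D : Type*} [Category D] [Abelian D] {J : D}

/-- class of a cocycle with values in `J`. -/
def hcl (K : ChainComplex D ℕ) (i : ℕ) (k : K.X i ⟶ J) (hk : K.d (i+1) i ≫ k = 0) :
    K.homology i ⟶ J :=
  K.homologyι i ≫ K.descOpcycles k (i+1) (by simp) hk

lemma hcl_add (K : ChainComplex D ℕ) (i : ℕ) (k k' : K.X i ⟶ J) (hk) (hk') (hkk) :
    hcl K i (k + k') hkk = hcl K i k hk + hcl K i k' hk' := by
  unfold hcl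
  rw [← Preadditive.comp_add]
  congr 1
  rw [← cancel_epi (K.pOpcycles i), Preadditive.comp_add]
  simp only [HomologicalComplex.p_descOpcycles]

lemma hcl_comp (K : ChainComplex D ℕ) (i : ℕ) (k : K.X i ⟶ J) (hk) (r : J ⟶ J) (hkk) :
    hcl K i (k ≫ r) hkk = hcl K i k hk ≫ r := by
  unfold hcl
  rw [Category.assoc]
  congr 1
  rw [← cancel_epi (K.pOpcycles i)]
  simp only [HomologicalComplex.p_descOpcycles, HomologicalComplex.p_descOpcycles_assoc]

lemma hcl_surj [Injective J] (K : ChainComplex D ℕ) (i : ℕ) (g : K.homology i ⟶ J) :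
    ∃ k hk, hcl K i k hk = g := by
  let k : K.opcycles i ⟶ J := Injective.factorThru g (K.homologyι i)
  have hk : K.homologyι i ≫ k = g := Injective.comp_factorThru _ _
  refine ⟨K.pOpcycles i ≫ k, by simp, ?_⟩
  rw [← hk]
  unfold hcl
  congr 1
  rw [← cancel_epi (K.pOpcycles i)]
  simp only [HomologicalComplex.p_descOpcycles]

lemma hcl_eq_zero [Injective J] (K : ChainComplex D ℕ) (i : ℕ) (k : K.X i ⟶ J) (hk)
    (h : hcl K i k hk = 0) :
    ∃ w : K.X ((ComplexShape.down ℕ).next i) ⟶ J, k = K.d i _ ≫ w := by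
  let j := (ComplexShape.down ℕ).next i
  let S := ShortComplex.mk _ _ (K.homologyι_comp_fromOpcycles i j)
  have hS : S.Exact := ShortComplex.exact_of_f_is_kernel S (K.homologyIsKernel i j rfl)
  let w := hS.descToInjective _ h
  have hw : K.fromOpcycles i j ≫ w = _ := hS.comp_descToInjective _ h
  refine ⟨w, ?_⟩
  have := congrArg (K.pOpcycles i ≫ ·) hw
  simp only [HomologicalComplex.p_descOpcycles, HomologicalComplex.p_fromOpcycles_assoc] at this
  exact this.symm

lemma hcl_boundary (K : ChainComplex D ℕ) (i j : ℕ) (k : K.X i ⟶ J) (hk) (w : K.X j ⟶ J)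
    (h : k = K.d i j ≫ w) : hcl K i k hk = 0 :=
  K.homologyι_descOpcycles_eq_zero_of_boundary k (i+1) (by simp) w h

lemma hcl_map (K L : ChainComplex D ℕ) (φ : K ⟶ L) (i : ℕ) (k : L.X i ⟶ J) (hk) (hk') :
    HomologicalComplex.homologyMap φ i ≫ hcl L i k hk = hcl K i (φ.f i ≫ k) hk' := by
  unfold hcl
  rw [HomologicalComplex.homologyι_naturality_assoc]
  congr 1
  rw [HomologicalComplex.opcyclesMap_comp_descOpcycles]

variable {C : Type*} [Category C] [Abelian C] [HasProjectiveResolutions C]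

section
variable {A : C} (P : ProjectiveResolution A) (G : C ⥤ D) [G.Additive]

/-- class in the left derived functor. -/
def dcl (i : ℕ) (k : G.obj (P.complex.X i) ⟶ J) (hk : G.map (P.complex.d (i+1) i) ≫ k = 0) :
    (G.leftDerived i).obj A ⟶ J :=
  (P.isoLeftDerivedObj G i).hom ≫
    hcl ((G.mapHomologicalComplex (ComplexShape.down ℕ)).obj P.complex) i k hk

lemma dcl_add (i : ℕ) (k k' k'' : G.obj (P.complex.X i) ⟶ J) (hk) (hk') (hk'')
    (h : k'' = k + k') : dcl P G i k'' hk'' = dcl P G i k hk + dcl P G i k' hk' := by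
  subst h
  exact (congrArg ((P.isoLeftDerivedObj G i).hom ≫ ·)
    (hcl_add ((G.mapHomologicalComplex (ComplexShape.down ℕ)).obj P.complex) i k k' hk hk' hk'')).trans
    (Preadditive.comp_add _ _ _ _ _ _)

lemma dcl_comp (i : ℕ) (k k' : G.obj (P.complex.X i) ⟶ J) (hk) (r : J ⟶ J) (hk')
    (h : k' = k ≫ r) : dcl P G i k' hk' = dcl P G i k hk ≫ r := by
  subst h
  exact (congrArg ((P.isoLeftDerivedObj G i).hom ≫ ·)
    (hcl_comp ((G.mapHomologicalComplex (ComplexShape.down ℕ)).obj P.complex) i k hk r hk')).trans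
    (Category.assoc _ _ _).symm

lemma dcl_surj [Injective J] (i : ℕ) (f : (G.leftDerived i).obj A ⟶ J) :
    ∃ k hk, dcl P G i k hk = f := by
  obtain ⟨k, hk, h⟩ := hcl_surj ((G.mapHomologicalComplex (ComplexShape.down ℕ)).obj P.complex) i
    ((P.isoLeftDerivedObj G i).inv ≫ f)
  refine ⟨k, hk, ?_⟩
  unfold dcl
  rw [h]
  exact Iso.hom_inv_id_assoc _ _

lemma dcl_eq_zero [Injective J] (i : ℕ) (k : G.obj (P.complex.X i) ⟶ J) (hk)
    (h : dcl P G i k hk = 0) :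
    ∃ w : G.obj (P.complex.X ((ComplexShape.down ℕ).next i)) ⟶ J,
      k = G.map (P.complex.d i _) ≫ w :=
  hcl_eq_zero ((G.mapHomologicalComplex (ComplexShape.down ℕ)).obj P.complex) i k hk
    ((cancel_epi (P.isoLeftDerivedObj G i).hom).1 (h.trans comp_zero.symm))

lemma dcl_boundary (i j : ℕ) (k : G.obj (P.complex.X i) ⟶ J) (hk)
    (w : G.obj (P.complex.X j) ⟶ J) (h : k = G.map (P.complex.d i j) ≫ w) :
    dcl P G i k hk = 0 := by
  exact (congrArg ((P.isoLeftDerivedObj G i).hom ≫ ·)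
    (hcl_boundary ((G.mapHomologicalComplex (ComplexShape.down ℕ)).obj P.complex)
      i j k hk w h)).trans comp_zero

lemma dcl_nat (G' : C ⥤ D) [G'.Additive] (α : G' ⟶ G) (i : ℕ)
    (k : G.obj (P.complex.X i) ⟶ J) (hk) (k') (hk') (h : k' = α.app _ ≫ k) :
    (NatTrans.leftDerived α i).app A ≫ dcl P G i k hk = dcl P G' i k' hk' := by
  subst h
  have e := P.leftDerived_app_eq α i
  have e2 : (NatTrans.leftDerived α i).app A ≫ (P.isoLeftDerivedObj G i).hom =
      (P.isoLeftDerivedObj G' i).hom ≫ HomologicalComplex.homologyMap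
        ((NatTrans.mapHomologicalComplex α _).app P.complex) i := by
    rw [e]
    exact (Category.assoc _ _ _).trans ((congrArg _ ((Category.assoc _ _ _).trans
      ((congrArg _ (Iso.inv_hom_id _)).trans (Category.comp_id _)))))
  exact ((Category.assoc _ _ _).symm.trans (congrArg (· ≫ _) e2)).trans
    ((Category.assoc _ _ _).trans (congrArg _
      (hcl_map _ _ ((NatTrans.mapHomologicalComplex α _).app P.complex) i k hk hk')))

lemma dcl_precomp {A' : C} (P' : ProjectiveResolution A') (f : A' ⟶ A)
    (φ : P'.complex ⟶ P.complex) (comm : φ.f 0 ≫ P.π.f 0 = P'.π.f 0 ≫ f) (i : ℕ)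
    (k : G.obj (P.complex.X i) ⟶ J) (hk) (k') (hk') (h : k' = G.map (φ.f i) ≫ k) :
    (G.leftDerived i).map f ≫ dcl P G i k hk = dcl P' G i k' hk' := by
  subst h
  have e2 := ProjectiveResolution.isoLeftDerivedObj_hom_naturality f P' P φ comm G i
  exact ((Category.assoc _ _ _).symm.trans (congrArg (· ≫ _) e2)).trans
    ((Category.assoc _ _ _).trans (congrArg _
      (hcl_map _ _ ((G.mapHomologicalComplex _).map φ) i k hk hk')))
end

end generic

abbrev E (i : ℕ) (A M : ModuleCat.{u} R) : ModuleCat.{u} R :=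
  ((Ext R (ModuleCat.{u} R) i).obj (op A)).obj M

/-- the map `op Hom(X,M) ⟶ op R` corresponding to an element. -/
def zop {X M : ModuleCat.{u} R} (z : X ⟶ M) : (Gf M).obj X ⟶ op (ModuleCat.of R R) :=
  (ModuleCat.ofHom (LinearMap.toSpanSingleton R (X ⟶ M) z)).op

lemma zop_surj {X M : ModuleCat.{u} R} (k : (Gf M).obj X ⟶ op (ModuleCat.of R R)) :
    ∃ z : X ⟶ M, zop z = k := by
  refine ⟨k.unop.hom (1 : R), ?_⟩
  apply Quiver.Hom.unop_inj
  ext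
  exact one_smul R _

lemma zop_inj {X M : ModuleCat.{u} R} {z w : X ⟶ M} (h : zop z = zop w) : z = w := by
  have := congrArg (fun k => k.unop.hom (1 : R)) h
  exact (one_smul R z).symm.trans (this.trans (one_smul R w))

lemma zop_comp {X Y M : ModuleCat.{u} R} (f : X ⟶ Y) (z : Y ⟶ M) :
    (Gf M).map f ≫ zop z = zop (f ≫ z) := by
  apply Quiver.Hom.unop_inj
  ext
  refine Eq.trans (b := f ≫ z) ?_ (one_smul R _).symm
  exact congrArg (f ≫ ·) (one_smul R z)

lemma zop_map {X M M' : ModuleCat.{u} R} (g : M ⟶ M') (z : X ⟶ M) :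
    ((((linearYoneda R (ModuleCat.{u} R)).map g).rightOp).app X) ≫ zop z = zop (z ≫ g) := by
  apply Quiver.Hom.unop_inj
  ext
  refine Eq.trans (b := z ≫ g) ?_ (one_smul R _).symm
  exact congrArg (· ≫ g) (one_smul R z)

lemma zop_zero {X M : ModuleCat.{u} R} : zop (0 : X ⟶ M) = 0 := by
  apply Quiver.Hom.unop_inj
  ext
  exact one_smul R _

lemma zop_add {X M : ModuleCat.{u} R} (z w : X ⟶ M) : zop (z + w) = zop z + zop w := by
  apply Quiver.Hom.unop_inj
  ext
  exact (one_smul R _).trans (congrArg₂ (· + ·) (one_smul R z).symm (one_smul R w).symm)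

lemma zop_smul {X M : ModuleCat.{u} R} (r : R) (z : X ⟶ M) :
    zop (r • z) = zop z ≫ (r • 𝟙 (ModuleCat.of R R)).op := by
  apply Quiver.Hom.unop_inj
  ext
  exact (one_smul R _).trans (congrArg (· • z) (mul_one r).symm)

variable {A : ModuleCat.{u} R} (P : ProjectiveResolution A) {M M' : ModuleCat.{u} R}

lemma zcond (i : ℕ) (z : P.complex.X i ⟶ M) (hz : P.complex.d (i+1) i ≫ z = 0) :
    (Gf M).map (P.complex.d (i+1) i) ≫ zop z = 0 :=
  (zop_comp _ _).trans ((congrArg zop hz).trans zop_zero)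

/-- Class of a cocycle, as a morphism to `op R`. -/
def clh (i : ℕ) (z : P.complex.X i ⟶ M) (hz : P.complex.d (i+1) i ≫ z = 0) :
    ((Gf M).leftDerived i).obj A ⟶ op (ModuleCat.of R R) :=
  dcl P (Gf M) i (zop z) (zcond P i z hz)

/-- Class of a cocycle in `Ext`. -/
def cl (i : ℕ) (z : P.complex.X i ⟶ M) (hz : P.complex.d (i+1) i ≫ z = 0) : E i A M :=
  (clh P i z hz).unop.hom (1 : R)

lemma eq_of_hom_eq {B : (ModuleCat.{u} R)ᵒᵖ} {f g : B ⟶ op (ModuleCat.of R R)}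
    (h : f.unop.hom (1 : R) = g.unop.hom (1 : R)) : f = g := by
  apply Quiver.Hom.unop_inj
  ext
  exact h

lemma exists_hom {B : (ModuleCat.{u} R)ᵒᵖ} (b : B.unop) :
    ∃ f : B ⟶ op (ModuleCat.of R R), f.unop.hom (1 : R) = b :=
  ⟨(ModuleCat.ofHom (LinearMap.toSpanSingleton R B.unop b)).op, one_smul R b⟩

instance : Projective (ModuleCat.of R R) :=
  ModuleCat.projective_of_free (ι := Unit) (Module.Basis.singleton Unit R)

lemma cl_add (i : ℕ) (z w : P.complex.X i ⟶ M) (hz : P.complex.d (i+1) i ≫ z = 0)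
    (hw : P.complex.d (i+1) i ≫ w = 0) (hzw : P.complex.d (i+1) i ≫ (z + w) = 0) :
    cl P i (z + w) hzw = cl P i z hz + cl P i w hw := by
  have : clh P i (z + w) hzw = clh P i z hz + clh P i w hw :=
    dcl_add P (Gf M) i _ _ _ _ _ _ (zop_add z w)
  unfold cl
  rw [this]
  rfl

lemma cl_smul (i : ℕ) (r : R) (z : P.complex.X i ⟶ M) (hz : P.complex.d (i+1) i ≫ z = 0)
    (hzw : P.complex.d (i+1) i ≫ (r • z) = 0) :
    cl P i (r • z) hzw = r • cl P i z hz := by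
  have : clh P i (r • z) hzw = clh P i z hz ≫ (r • 𝟙 (ModuleCat.of R R)).op :=
    dcl_comp P (Gf M) i _ _ _ _ _ (zop_smul r z)
  unfold cl
  rw [this]
  exact (congrArg (clh P i z hz).unop.hom (mul_comm r 1 : r * 1 = 1 * r) ).trans
    ((congrArg (clh P i z hz).unop.hom (mul_comm 1 r : 1 * r = r * 1)).trans
      ((clh P i z hz).unop.hom.map_smul r (1 : R)))

lemma cl_surj (i : ℕ) (e : E i A M) : ∃ z hz, cl P i (M := M) z hz = e := by
  obtain ⟨f, hf⟩ := exists_hom (B := ((Gf M).leftDerived i).obj A) e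
  obtain ⟨k, hk, h⟩ := dcl_surj P (Gf M) i f
  obtain ⟨z, rfl⟩ := zop_surj k
  have hz' : P.complex.d (i+1) i ≫ z = 0 := by
    apply zop_inj
    exact ((zop_comp _ _).symm.trans hk).trans zop_zero.symm
  refine ⟨z, hz', ?_⟩
  have : clh P i z hz' = f := h
  unfold cl
  rw [this, hf]

lemma cl_eq_zero (i : ℕ) (z : P.complex.X i ⟶ M) (hz) (h : cl P i z hz = 0) :
    ∃ w : P.complex.X ((ComplexShape.down ℕ).next i) ⟶ M, z = P.complex.d i _ ≫ w := by
  have h0 : clh P i z hz = 0 := eq_of_hom_eq h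
  obtain ⟨k, hk⟩ := dcl_eq_zero _ _ _ _ _ h0
  obtain ⟨w, rfl⟩ := zop_surj k
  exact ⟨w, zop_inj (hk.trans (zop_comp _ _))⟩

lemma cl_boundary (i j : ℕ) (z : P.complex.X i ⟶ M) (hz) (w : P.complex.X j ⟶ M)
    (h : z = P.complex.d i j ≫ w) : cl P i z hz = 0 := by
  have h0 : clh P i z hz = 0 :=
    dcl_boundary P (Gf M) i j _ _ (zop w) (by rw [h]; exact (zop_comp _ _).symm)
  unfold cl
  rw [h0]; rfl

lemma cl_map (i : ℕ) (g : M ⟶ M') (z : P.complex.X i ⟶ M) (hz) (hz') :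
    (((Ext R (ModuleCat.{u} R) i).obj (op A)).map g).hom (cl P i z hz) = cl P i (z ≫ g) hz' := by
  have : (NatTrans.leftDerived (((linearYoneda R (ModuleCat.{u} R)).map g).rightOp) i).app A ≫
      clh P i z hz = clh P i (z ≫ g) hz' :=
    dcl_nat P (Gf M) (Gf M') _ i _ _ _ _ (zop_map g z).symm
  unfold cl
  rw [← this]
  rfl

lemma cl_precomp {A' : ModuleCat.{u} R} (P' : ProjectiveResolution A') (f : A' ⟶ A)
    (φ : P'.complex ⟶ P.complex) (comm : φ.f 0 ≫ P.π.f 0 = P'.π.f 0 ≫ f)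
    (i : ℕ) (z : P.complex.X i ⟶ M) (hz) (hz') :
    (((Ext R (ModuleCat.{u} R) i).map f.op).app M).hom (cl P i z hz) = cl P' i (φ.f i ≫ z) hz' := by
  have : ((Gf M).leftDerived i).map f ≫ clh P i z hz = clh P' i (φ.f i ≫ z) hz' :=
    dcl_precomp P (Gf M) P' f φ comm i _ _ _ _ (zop_comp (φ.f i) z).symm
  unfold cl
  rw [← this]
  rfl

end LC
end

section
namespace LC
open Opposite Limits
variable {R : Type} [CommRing R]

variable (J : Ideal R)

abbrev Qt (t : ℕ) : ModuleCat.{0} R := ModuleCat.of R (R ⧸ J ^ t)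

/-- A chosen projective resolution of `R/J^t`. -/
def PR (t : ℕ) : ProjectiveResolution (Qt J t) := projectiveResolution _

abbrev CX (t i : ℕ) : ModuleCat.{0} R := (PR J t).complex.X i
abbrev dd (t i j : ℕ) : CX J t i ⟶ CX J t j := (PR J t).complex.d i j

/-- The transition map. -/
def tr {t t' : ℕ} (h : t ≤ t') : Qt J t' ⟶ Qt J t :=
  ModuleCat.ofHom <| Submodule.mapQ _ _ LinearMap.id (Ideal.pow_le_pow_right h)

/-- Lift of the transition map. -/
def ph {t t' : ℕ} (h : t ≤ t') : (PR J t').complex ⟶ (PR J t).complex :=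
  ProjectiveResolution.lift (tr J h) _ _

variable {M M' : ModuleCat.{0} R}

abbrev Dg (i : ℕ) := localCohomology.diagram (localCohomology.idealPowersDiagram J) i

abbrev HH (i : ℕ) (M : ModuleCat.{0} R) : ModuleCat.{0} R := (localCohomology J i).obj M

/-- canonical map into the colimit. -/
def embC (i t : ℕ) (M : ModuleCat.{0} R) : E i (Qt J t) M ⟶ HH J i M :=
  (colimit.ι (Dg J i) (op (op t))).app M

def isC (i : ℕ) (M : ModuleCat.{0} R) :=
  isColimitOfPreserves ((evaluation (ModuleCat.{0} R) (ModuleCat.{0} R)).obj M)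
    (colimit.isColimit (Dg J i))

lemma embC_surj (i : ℕ) (M : ModuleCat.{0} R) (x : HH J i M) :
    ∃ (t : ℕ) (e : E i (Qt J t) M), (embC J i t M).hom e = x := by
  obtain ⟨j, e, h⟩ := Concrete.isColimit_exists_rep _ (isC J i M) x
  exact ⟨j.unop.unop, e, h⟩

lemma embC_tr (i : ℕ) (M : ModuleCat.{0} R) {t t' : ℕ} (h : t ≤ t') (e : E i (Qt J t) M) :
    (embC J i t' M).hom ((((Ext R (ModuleCat.{0} R) i).map (tr J h).op).app M).hom e) =
      (embC J i t M).hom e := by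
  have := congrArg (fun f => (f.app M).hom e)
    (colimit.w (Dg J i) (homOfLE h).op.op)
  exact this

lemma embC_zero (i t : ℕ) (M : ModuleCat.{0} R) (e : E i (Qt J t) M) (h : (embC J i t M).hom e = 0) :
    ∃ (t' : ℕ) (h : t ≤ t'), (((Ext R (ModuleCat.{0} R) i).map (tr J h).op).app M).hom e = 0 := by
  obtain ⟨j, f, g, h⟩ := Concrete.isColimit_exists_of_rep_eq _ (isC J i M)
    (i := op (op t)) (j := op (op t)) e 0 (h.trans (map_zero _).symm)
  exact ⟨j.unop.unop, leOfHom f.unop.unop, h.trans (map_zero _)⟩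

/-- class of a cocycle in local cohomology. -/
def c (t i : ℕ) (z : CX J t i ⟶ M) (hz : dd J t (i+1) i ≫ z = 0) : HH J i M :=
  (embC J i t M).hom (cl (PR J t) i z hz)

lemma c_surj (i : ℕ) (x : HH J i M) : ∃ t z hz, c J t i (M := M) z hz = x := by
  obtain ⟨t, e, rfl⟩ := embC_surj J i M x
  obtain ⟨z, hz, rfl⟩ := cl_surj (PR J t) i e
  exact ⟨t, z, hz, rfl⟩

lemma ph_cocycle {t t' : ℕ} (h : t ≤ t') (i : ℕ) (z : CX J t i ⟶ M)
    (hz : dd J t (i+1) i ≫ z = 0) : dd J t' (i+1) i ≫ (ph J h).f i ≫ z = 0 := by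
  rw [← HomologicalComplex.Hom.comm_assoc, hz, comp_zero]

lemma c_tr {t t' : ℕ} (h : t ≤ t') (i : ℕ) (z : CX J t i ⟶ M) (hz) (hz') :
    c J t' i ((ph J h).f i ≫ z) hz' = c J t i z hz := by
  unfold c
  rw [← embC_tr J i M h, cl_precomp (PR J t) (PR J t') (tr J h) (ph J h)]
  exact ProjectiveResolution.lift_commutes_zero _ _ _

lemma c_eq_zero (t i : ℕ) (z : CX J t i ⟶ M) (hz) (h : c J t i z hz = 0) :
    ∃ (t' : ℕ) (h : t ≤ t') (w : CX J t' ((ComplexShape.down ℕ).next i) ⟶ M),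
      (ph J h).f i ≫ z = dd J t' i _ ≫ w := by
  obtain ⟨t', h, h'⟩ := embC_zero J i t M _ h
  rw [cl_precomp (PR J t) (PR J t') (tr J h) (ph J h)
    (ProjectiveResolution.lift_commutes_zero _ _ _) i z hz (ph_cocycle J h i z hz)] at h'
  obtain ⟨w, hw⟩ := cl_eq_zero _ _ _ _ h'
  exact ⟨t', h, w, hw⟩

lemma c_boundary (t i j : ℕ) (z : CX J t i ⟶ M) (hz) (w : CX J t j ⟶ M)
    (h : z = dd J t i j ≫ w) : c J t i z hz = 0 := by
  unfold c
  rw [cl_boundary _ i j z hz w h, map_zero]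

lemma c_add (t i : ℕ) (z w : CX J t i ⟶ M) (hz) (hw) (hzw) :
    c J t i (z + w) hzw = c J t i z hz + c J t i w hw := by
  unfold c
  rw [cl_add _ i z w hz hw, map_add]

lemma c_smul (t i : ℕ) (r : R) (z : CX J t i ⟶ M) (hz) (hzw) :
    c J t i (r • z) hzw = r • c J t i z hz := by
  unfold c
  rw [cl_smul _ i r z hz, map_smul]

lemma c_map (t i : ℕ) (g : M ⟶ M') (z : CX J t i ⟶ M) (hz) (hz') :
    ((localCohomology J i).map g).hom (c J t i z hz) = c J t i (z ≫ g) hz' := by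
  unfold c
  rw [← cl_map _ i g z hz]
  have := congrArg (fun f => f.hom (cl (PR J t) i z hz))
    ((colimit.ι (Dg J i) (op (op t))).naturality g)
  exact this.symm

end LC
end

section
namespace LC
open Opposite Limits
variable {R : Type} [CommRing R]
variable (J : Ideal R) {M M' : ModuleCat.{0} R}

lemma c_eq_zero_succ (t i : ℕ) (z : CX J t (i+1) ⟶ M) (hz) (h : c J t (i+1) z hz = 0) :
    ∃ (t' : ℕ) (h : t ≤ t') (w : CX J t' i ⟶ M),
      (ph J h).f (i+1) ≫ z = dd J t' (i+1) i ≫ w := by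
  obtain ⟨t', h, w, hw⟩ := c_eq_zero J t (i+1) z hz h
  have := ChainComplex.next_nat_succ i
  revert w
  rw [this]
  intro w hw
  exact ⟨t', h, w, hw⟩

lemma c_eq_zero_zero (t : ℕ) (z : CX J t 0 ⟶ M) (hz) (h : c J t 0 z hz = 0) :
    ∃ (t' : ℕ) (h : t ≤ t'), (ph J h).f 0 ≫ z = 0 := by
  obtain ⟨t', h, w, hw⟩ := c_eq_zero J t 0 z hz h
  refine ⟨t', h, hw.trans ?_⟩
  have : dd J t' 0 ((ComplexShape.down ℕ).next 0) = 0 :=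
    HomologicalComplex.shape _ _ _ (by simp)
  rw [this, zero_comp]

lemma c_congr (t i : ℕ) {z w : CX J t i ⟶ M} (h : z = w) (hz) (hw) :
    c J t i z hz = c J t i w hw := by subst h; rfl

abbrev Hm (i : ℕ) (f : M ⟶ M') : HH J i M →ₗ[R] HH J i M' := ((localCohomology J i).map f).hom

lemma coc_map {t i : ℕ} {z : CX J t i ⟶ M} (hz : dd J t (i+1) i ≫ z = 0) (g : M ⟶ M') :
    dd J t (i+1) i ≫ z ≫ g = 0 := by
  rw [reassoc_of% hz, zero_comp]

lemma coc_smul {t i : ℕ} {z : CX J t i ⟶ M} (hz : dd J t (i+1) i ≫ z = 0) (r : R) :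
    dd J t (i+1) i ≫ (r • z) = 0 := by
  rw [Linear.comp_smul, hz, smul_zero]

lemma Hm_add (i : ℕ) (f g : M ⟶ M') : Hm J i (f + g) = Hm J i f + Hm J i g := by
  ext x
  obtain ⟨t, z, hz, rfl⟩ := c_surj J i x
  have hf := coc_map J hz f
  have hg := coc_map J hz g
  have hfg := coc_map J hz (f + g)
  rw [LinearMap.add_apply]
  unfold Hm
  rw [c_map J t i f z hz hf, c_map J t i g z hz hg, c_map J t i (f + g) z hz hfg]
  rw [← c_add J t i _ _ hf hg (by rw [Preadditive.comp_add, hf, hg, add_zero])]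
  apply c_congr
  rw [Preadditive.comp_add]

lemma Hm_smul (i : ℕ) (r : R) (f : M ⟶ M') : Hm J i (r • f) = r • Hm J i f := by
  ext x
  obtain ⟨t, z, hz, rfl⟩ := c_surj J i x
  have hf := coc_map J hz f
  rw [LinearMap.smul_apply]
  unfold Hm
  rw [c_map J t i f z hz hf, c_map J t i (r • f) z hz (coc_map J hz (r • f))]
  rw [← c_smul J t i r _ hf (coc_smul J hf r)]
  apply c_congr
  rw [Linear.comp_smul]

lemma Hm_comp {M'' : ModuleCat.{0} R} (i : ℕ) (f : M ⟶ M') (g : M' ⟶ M'') :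
    Hm J i (f ≫ g) = (Hm J i g).comp (Hm J i f) := by
  unfold Hm
  rw [Functor.map_comp]
  rfl

lemma Hm_id (i : ℕ) : Hm J i (𝟙 M) = LinearMap.id := by
  unfold Hm
  rw [CategoryTheory.Functor.map_id]
  rfl

lemma c_tors (t i : ℕ) (z : CX J t i ⟶ M) (hz) (x : R) (hx : x ∈ J ^ t) :
    x • c J t i z hz = 0 := by
  have hxz := coc_smul J hz x
  rw [← c_smul J t i x z hz hxz]
  let F : (PR J t).complex ⟶ (PR J t).complex := x • 𝟙 _
  have hF0 : F.f 0 ≫ (PR J t).π.f 0 = 0 := by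
    have hk : (x • 𝟙 (Qt J t)) = 0 := by
      refine ModuleCat.hom_ext (LinearMap.ext fun (y : R ⧸ J ^ t) => ?_)
      change x • (y : R ⧸ J ^ t) = 0
      obtain ⟨y, rfl⟩ := Ideal.Quotient.mk_surjective y
      exact Ideal.Quotient.eq_zero_iff_mem.2 (Ideal.mul_mem_right y _ hx)
    change (x • 𝟙 _) ≫ (PR J t).π.f 0 = 0
    rw [Linear.smul_comp, Category.id_comp]
    have : x • (PR J t).π.f 0 = (PR J t).π.f 0 ≫ (x • 𝟙 (Qt J t)) := by
      exact ((Linear.comp_smul _ _ _ _ x (𝟙 _)).trans (congrArg _ (Category.comp_id _))).symm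
    rw [this, hk]
    exact comp_zero
  have hF : F ≫ (PR J t).π = 0 := by
    refine HomologicalComplex.Hom.ext (funext fun k => ?_)
    cases k with
    | zero => exact hF0
    | succ k =>
      rw [HomologicalComplex.comp_f, ProjectiveResolution.π_f_succ, comp_zero]; rfl
  let h := ProjectiveResolution.liftHomotopyZero F hF
  have hc := h.comm i
  refine c_boundary J t i ((ComplexShape.down ℕ).next i) _ hxz
    (h.hom ((ComplexShape.down ℕ).next i) i ≫ z) ?_
  have e : x • z = F.f i ≫ z := by
    change _ = (x • 𝟙 _) ≫ z
    rw [Linear.smul_comp, Category.id_comp]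
  rw [e, hc]
  have e2 : prevD i h.hom ≫ z = 0 := by
    have : prevD i h.hom = h.hom i (i+1) ≫ (PR J t).complex.d (i+1) i :=
      prevD_eq _ (by simp)
    rw [this, Category.assoc]
    exact (congrArg _ hz).trans comp_zero
  rw [Preadditive.add_comp, Preadditive.add_comp, e2]
  rw [add_zero, HomologicalComplex.zero_f, zero_comp, add_zero, ← Category.assoc]
  rfl

lemma H_tors (i : ℕ) (x : HH J i M) : ∃ t : ℕ, ∀ r ∈ J ^ t, r • x = 0 := by
  obtain ⟨t, z, hz, rfl⟩ := c_surj J i x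
  exact ⟨t, fun r hr => c_tors J t i z hz r hr⟩

variable {S : ShortComplex (ModuleCat.{0} R)}

lemma dd_dd (t i j k : ℕ) (w : CX J t k ⟶ M) : dd J t i j ≫ dd J t j k ≫ w = 0 := by
  rw [← Category.assoc, HomologicalComplex.d_comp_d, zero_comp]

lemma les_surj (hS : S.ShortExact) (i : ℕ) (h : Subsingleton (HH J (i+1) S.X₁)) :
    Function.Surjective (Hm J i S.g) := by
  intro x
  have := hS.mono_f
  have := hS.epi_g
  obtain ⟨t, z, hz, rfl⟩ := c_surj J i x
  obtain ⟨y, rfl⟩ : ∃ y, y ≫ S.g = z := ⟨Projective.factorThru z S.g, by simp⟩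
  obtain ⟨a, ha⟩ : ∃ a, a ≫ S.f = dd J t (i+1) i ≫ y :=
    ⟨hS.exact.lift _ (by rw [Category.assoc, hz]), hS.exact.lift_f _ _⟩
  have ha' : dd J t (i+1+1) (i+1) ≫ a = 0 := by
    rw [← cancel_mono S.f, Category.assoc, ha, dd_dd J, zero_comp]
  obtain ⟨t', htt, w, hw⟩ := c_eq_zero_succ J t i a ha' (Subsingleton.elim _ _)
  have hy : dd J t' (i+1) i ≫ ((ph J htt).f i ≫ y - w ≫ S.f) = 0 := by
    rw [Preadditive.comp_sub, ← reassoc_of% hw, ha, HomologicalComplex.Hom.comm_assoc, sub_self]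
  refine ⟨c J t' i _ hy, ?_⟩
  rw [← c_tr J htt i _ hz (ph_cocycle J htt i _ hz)]
  refine (c_map J t' i S.g _ hy (coc_map J hy _)).trans ?_
  apply c_congr
  simp

lemma les_mid (hS : S.ShortExact) (i : ℕ) (x : HH J i S.X₂) (hx : Hm J i S.g x = 0) : ∃ y, Hm J i S.f y = x := by
  have := hS.mono_f
  have := hS.epi_g
  obtain ⟨t, z, hz, rfl⟩ := c_surj J i x
  have hg := (c_map J t i S.g z hz (coc_map J hz _)).symm.trans hx
  obtain ⟨t', htt, w, hw⟩ := c_eq_zero J t i _ _ hg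
  obtain ⟨y, rfl⟩ : ∃ y, y ≫ S.g = w := ⟨Projective.factorThru w S.g, by simp⟩
  obtain ⟨a, ha⟩ : ∃ a, a ≫ S.f = (ph J htt).f i ≫ z - dd J t' i _ ≫ y :=
    ⟨hS.exact.lift _ (by simp [hw]), hS.exact.lift_f _ _⟩
  have hz2 := ph_cocycle J htt i z hz
  have ha' : dd J t' (i+1) i ≫ a = 0 := by
    rw [← cancel_mono S.f, Category.assoc, ha, Preadditive.comp_sub, dd_dd J, hz2, zero_comp,
      sub_zero]
  refine ⟨c J t' i a ha', ?_⟩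
  refine (c_map J t' i S.f _ ha' (coc_map J ha' _)).trans ?_
  rw [← c_tr J htt i _ hz hz2]
  have e : (ph J htt).f i ≫ z = a ≫ S.f + dd J t' i _ ≫ y := by rw [ha]; abel
  rw [c_congr J t' i e hz2 (by rw [← e]; exact hz2),
    c_add J t' i _ _ (coc_map J ha' _) (dd_dd J _ _ _ _ _),
    c_boundary J t' i _ (dd J t' i _ ≫ y) _ y rfl, add_zero]

lemma les_inj (hS : S.ShortExact) (i : ℕ) (h : Subsingleton (HH J i S.X₃)) :
    Function.Injective (Hm J (i+1) S.f) := by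
  rw [injective_iff_map_eq_zero]
  intro x hx
  have := hS.mono_f
  have := hS.epi_g
  obtain ⟨t, z, hz, rfl⟩ := c_surj J (i+1) x
  have hg := (c_map J t (i+1) S.f z hz (coc_map J hz _)).symm.trans hx
  obtain ⟨t', htt, w, hw⟩ := c_eq_zero_succ J t i _ _ hg
  have hwg : dd J t' (i+1) i ≫ w ≫ S.g = 0 := by
    rw [← reassoc_of% hw]; simp
  obtain ⟨t2, h2, v, hv⟩ := c_eq_zero J t' i _ hwg (Subsingleton.elim _ _)
  obtain ⟨y, rfl⟩ : ∃ y, y ≫ S.g = v := ⟨Projective.factorThru v S.g, by simp⟩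
  obtain ⟨a, ha⟩ : ∃ a, a ≫ S.f = (ph J h2).f i ≫ w - dd J t2 i _ ≫ y :=
    ⟨hS.exact.lift _ (by simp [hv]), hS.exact.lift_f _ _⟩
  have hz1 := ph_cocycle J htt _ z hz
  have hz2 := ph_cocycle J h2 _ _ hz1
  rw [← c_tr J htt (i+1) _ hz hz1, ← c_tr J h2 (i+1) _ hz1 hz2]
  refine c_boundary J t2 (i+1) i _ _ a ?_
  rw [← cancel_mono S.f, Category.assoc, Category.assoc, Category.assoc, hw, ha,
    Preadditive.comp_sub, dd_dd J, sub_zero, HomologicalComplex.Hom.comm_assoc]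

lemma les_inj_zero (hS : S.ShortExact) : Function.Injective (Hm J 0 S.f) := by
  rw [injective_iff_map_eq_zero]
  intro x hx
  have := hS.mono_f
  obtain ⟨t, z, hz, rfl⟩ := c_surj J 0 x
  have hg := (c_map J t 0 S.f z hz (coc_map J hz _)).symm.trans hx
  obtain ⟨t', htt, hw⟩ := c_eq_zero_zero J t _ _ hg
  have hz1 := ph_cocycle J htt _ z hz
  rw [← c_tr J htt 0 _ hz hz1]
  refine c_boundary J t' 0 0 _ _ 0 ?_
  rw [← cancel_mono S.f, Category.assoc, hw]
  simp

end LC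
end

section
namespace LC
open Opposite Limits
section unb
variable {R : Type} [CommRing R] (J : Ideal R)
variable {A B C : Type} [AddCommGroup A] [Module R A] [AddCommGroup B] [Module R B]
  [AddCommGroup C] [Module R C]

/-- Local cohomology of an unbundled module. -/
abbrev HA (i : ℕ) (A : Type) [AddCommGroup A] [Module R A] : ModuleCat.{0} R :=
  HH J i (ModuleCat.of R A)

def Hl (i : ℕ) (f : A →ₗ[R] B) : HA J i A →ₗ[R] HA J i B := Hm J i (ModuleCat.ofHom f)

lemma Hl_add (i : ℕ) (f g : A →ₗ[R] B) : Hl J i (f + g) = Hl J i f + Hl J i g :=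
  Hm_add J i _ _

lemma Hl_smul (i : ℕ) (r : R) (f : A →ₗ[R] B) : Hl J i (r • f) = r • Hl J i f :=
  Hm_smul J i _ _

lemma Hl_comp (i : ℕ) (g : B →ₗ[R] C) (f : A →ₗ[R] B) :
    Hl J i (g ∘ₗ f) = Hl J i g ∘ₗ Hl J i f :=
  Hm_comp J i _ _

lemma Hl_id (i : ℕ) : Hl J i (LinearMap.id : A →ₗ[R] A) = LinearMap.id :=
  Hm_id J i

lemma Hl_zero (i : ℕ) : Hl J i (0 : A →ₗ[R] B) = 0 := by
  have := Hl_smul J i 0 (0 : A →ₗ[R] B)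
  rwa [zero_smul, zero_smul] at this

lemma Hl_sum {ι : Type} (s : Finset ι) (i : ℕ) (f : ι → A →ₗ[R] B) :
    Hl J i (∑ k ∈ s, f k) = ∑ k ∈ s, Hl J i (f k) := by
  classical
  induction s using Finset.induction_on with
  | empty => simp [Hl_zero]
  | insert a s ha ih => rw [Finset.sum_insert ha, Finset.sum_insert ha, Hl_add, ih]

/-- short complex from linear maps. -/
def SC (f : A →ₗ[R] B) (g : B →ₗ[R] C) (h : Function.Exact f g) :
    ShortComplex (ModuleCat.{0} R) :=
  ShortComplex.mk (ModuleCat.ofHom f) (ModuleCat.ofHom g)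
    (by ext x; exact h.apply_apply_eq_zero x)

lemma SC_se (f : A →ₗ[R] B) (g : B →ₗ[R] C) (h : Function.Exact f g)
    (hf : Function.Injective f) (hg : Function.Surjective g) : (SC f g h).ShortExact where
  exact := (ShortComplex.ShortExact.moduleCat_exact_iff_function_exact _).2 h
  mono_f := (ModuleCat.mono_iff_injective _).2 hf
  epi_g := (ModuleCat.epi_iff_surjective _).2 hg

lemma H_surj {f : A →ₗ[R] B} {g : B →ₗ[R] C} (h : Function.Exact f g)
    (hf : Function.Injective f) (hg : Function.Surjective g) (i : ℕ)
    (hs : Subsingleton (HA J (i+1) A)) : Function.Surjective (Hl J i g) :=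
  les_surj J (SC_se f g h hf hg) i hs

lemma H_surj' {f : A →ₗ[R] B} {g : B →ₗ[R] C} (h : Function.Exact f g)
    (hf : Function.Injective f) (hg : Function.Surjective g) (i : ℕ)
    (hs : Subsingleton (HA J i C)) : Function.Surjective (Hl J i f) :=
  fun x => les_mid J (SC_se f g h hf hg) i x (Subsingleton.elim (α := HA J i C) _ _)

lemma H_inj {f : A →ₗ[R] B} {g : B →ₗ[R] C} (h : Function.Exact f g)
    (hf : Function.Injective f) (hg : Function.Surjective g) (i : ℕ)
    (hs : Subsingleton (HA J i C)) : Function.Injective (Hl J (i+1) f) :=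
  les_inj J (SC_se f g h hf hg) i hs

lemma H_inj_zero {f : A →ₗ[R] B} {g : B →ₗ[R] C} (h : Function.Exact f g)
    (hf : Function.Injective f) (hg : Function.Surjective g) :
    Function.Injective (Hl J 0 f) :=
  les_inj_zero J (SC_se f g h hf hg)

lemma H_vanish_of_inj (i : ℕ) (x : R) (hx : x ∈ J)
    (h : Function.Injective (Hl J i (x • (LinearMap.id : A →ₗ[R] A)))) :
    Subsingleton (HA J i A) := by
  rw [Hl_smul, Hl_id] at h
  refine subsingleton_of_forall_eq 0 fun y => ?_
  obtain ⟨t, ht⟩ := H_tors J i y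
  have h1 := ht _ (Ideal.pow_mem_pow hx t)
  clear ht
  induction t with
  | zero => simpa using h1
  | succ t ih =>
    apply ih
    apply h
    rw [map_zero, LinearMap.smul_apply, LinearMap.id_apply, smul_smul, ← pow_succ']
    exact h1

/-- vanishing passes along a retract up to scalars -/
lemma H_smul_zero (i : ℕ) (s : R) (u : A →ₗ[R] B) (v : B →ₗ[R] A)
    (huv : v ∘ₗ u = s • LinearMap.id) (hB : Subsingleton (HA J i B)) (x : HA J i A) :
    s • x = 0 := by
  have h1 : Hl J i (v ∘ₗ u) x = s • x := by
    rw [huv, Hl_smul, Hl_id]; rfl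
  rw [← h1, Hl_comp, LinearMap.comp_apply, Subsingleton.elim (Hl J i u x) 0, map_zero]

lemma H_free (i : ℕ) (hR : Subsingleton (HA J i R)) [Module.Free R A] [Module.Finite R A] :
    Subsingleton (HA J i A) := by
  let b := Module.Free.chooseBasis R A
  have e : (LinearMap.id : A →ₗ[R] A) =
      ∑ k, (LinearMap.toSpanSingleton R A (b k)) ∘ₗ b.coord k := by
    ext x
    simp [b.sum_repr]
  refine subsingleton_of_forall_eq 0 fun y => ?_
  have h1 : Hl J i (LinearMap.id : A →ₗ[R] A) y = y := by rw [Hl_id]; rfl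
  rw [← h1, e, Hl_sum, LinearMap.sum_apply]
  refine Finset.sum_eq_zero fun k _ => ?_
  rw [Hl_comp, LinearMap.comp_apply, Subsingleton.elim (Hl J i (b.coord k) y) 0, map_zero]

end unb

section poly
variable (K : Type) [Field K] (n : ℕ)
abbrev SS := MvPolynomial (Fin (n+1)) K
abbrev mm : Ideal (SS K n) := Ideal.span (Set.range MvPolynomial.X)

def Ik (k : ℕ) : Ideal (SS K n) := Ideal.span (MvPolynomial.X '' {j : Fin (n+1) | j.1 < k})

lemma mem_Ik_of_mul (k : Fin (n+1)) (p : SS K n) (h : MvPolynomial.X k * p ∈ Ik K n k) :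
    p ∈ Ik K n k := by
  unfold Ik at *
  rw [MvPolynomial.mem_ideal_span_X_image] at *
  intro m hm
  obtain ⟨j, hj, hj'⟩ := h (m + Finsupp.single k 1) (by
    rw [MvPolynomial.mem_support_iff, add_comm m, MvPolynomial.coeff_X_mul]
    exact MvPolynomial.mem_support_iff.1 hm)
  refine ⟨j, hj, ?_⟩
  have : k ≠ j := by rintro rfl; simp at hj
  simpa [Finsupp.single_apply, this] using hj'

lemma Ik_succ (k : Fin (n+1)) : Ik K n (k.1+1) = Ik K n k ⊔ Ideal.span {MvPolynomial.X k} := by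
  unfold Ik
  rw [← Ideal.span_union]
  congr 1
  ext p
  simp only [Set.mem_image, Set.mem_ofPred_eq, Set.mem_union, Set.mem_singleton_iff]
  constructor
  · rintro ⟨j, hj, rfl⟩
    rcases Nat.lt_succ_iff_lt_or_eq.1 hj with h | h
    · exact Or.inl ⟨j, h, rfl⟩
    · right; congr 1; exact Fin.ext h
  · rintro (⟨j, hj, rfl⟩ | rfl)
    · exact ⟨j, by omega, rfl⟩
    · exact ⟨k, by omega, rfl⟩

/-- quotient map -/
def gk (k : ℕ) : (SS K n ⧸ Ik K n k) →ₗ[SS K n] (SS K n ⧸ Ik K n (k+1)) :=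
  Submodule.mapQ _ _ LinearMap.id (Ideal.span_mono (Set.image_mono fun _ hj => Nat.lt_succ_of_lt hj))

lemma gk_surj (k : ℕ) : Function.Surjective (gk K n k) := by
  intro y
  obtain ⟨p, rfl⟩ := Submodule.Quotient.mk_surjective _ y
  exact ⟨Submodule.Quotient.mk p, rfl⟩

lemma fk_inj (k : Fin (n+1)) : Function.Injective
    ((MvPolynomial.X k : SS K n) • (LinearMap.id : (SS K n ⧸ Ik K n k) →ₗ[SS K n] _)) := by
  rw [injective_iff_map_eq_zero]
  intro y hy
  obtain ⟨p, rfl⟩ := Submodule.Quotient.mk_surjective _ y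
  rw [LinearMap.smul_apply, LinearMap.id_apply, ← Submodule.Quotient.mk_smul,
    Submodule.Quotient.mk_eq_zero] at hy
  rw [Submodule.Quotient.mk_eq_zero]
  exact mem_Ik_of_mul K n k p hy

lemma fg_exact (k : Fin (n+1)) : Function.Exact
    ((MvPolynomial.X k : SS K n) • (LinearMap.id : (SS K n ⧸ Ik K n k) →ₗ[SS K n] _))
    (gk K n k) := by
  intro y
  obtain ⟨p, rfl⟩ := Submodule.Quotient.mk_surjective _ y
  have e : gk K n k (Submodule.Quotient.mk p) = Submodule.Quotient.mk p := rfl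
  rw [e, Submodule.Quotient.mk_eq_zero, Ik_succ]
  constructor
  · intro h
    obtain ⟨a, ha, b, hb, hab⟩ := Submodule.mem_sup.1 h
    obtain ⟨q, rfl⟩ := Ideal.mem_span_singleton'.1 hb
    refine ⟨Submodule.Quotient.mk q, ?_⟩
    rw [LinearMap.smul_apply, LinearMap.id_apply, ← Submodule.Quotient.mk_smul,
      eq_comm, Submodule.Quotient.eq, ← hab]
    rw [smul_eq_mul, mul_comm q, add_sub_cancel_right]
    exact ha
  · rintro ⟨q, hq⟩
    obtain ⟨q, rfl⟩ := Submodule.Quotient.mk_surjective _ q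
    rw [LinearMap.smul_apply, LinearMap.id_apply, ← Submodule.Quotient.mk_smul,
      eq_comm, Submodule.Quotient.eq] at hq
    have : p = (p - (MvPolynomial.X k : SS K n) • q) + q * MvPolynomial.X k := by
      rw [smul_eq_mul]; ring
    rw [this]
    exact Submodule.add_mem_sup hq (Ideal.mem_span_singleton'.2 ⟨q, rfl⟩)

lemma H_Ik (i : ℕ) : ∀ k : ℕ, i + k < n + 1 →
    Subsingleton (HA (mm K n) i (SS K n ⧸ Ik K n k)) := by
  induction i with
  | zero =>
    intro k hk
    obtain ⟨k, rfl⟩ : ∃ k' : Fin (n+1), k'.1 = k := ⟨⟨k, by omega⟩, rfl⟩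
    exact H_vanish_of_inj (mm K n) 0 (MvPolynomial.X k) (Ideal.subset_span ⟨k, rfl⟩)
      (H_inj_zero (mm K n) (fg_exact K n k) (fk_inj K n k) (gk_surj K n k))
  | succ i ih =>
    intro k hk
    obtain ⟨k, rfl⟩ : ∃ k' : Fin (n+1), k'.1 = k := ⟨⟨k, by omega⟩, rfl⟩
    exact H_vanish_of_inj (mm K n) (i+1) (MvPolynomial.X k) (Ideal.subset_span ⟨k, rfl⟩)
      (H_inj (mm K n) (fg_exact K n k) (fk_inj K n k) (gk_surj K n k) i (ih _ (by omega)))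

lemma H_SS (i : ℕ) (hi : i ≤ n) : Subsingleton (HA (mm K n) i (SS K n)) := by
  have h := H_Ik K n i 0 (by omega)
  have h0 : Ik K n 0 = ⊥ := by simp [Ik]
  let e : SS K n ≃ₗ[SS K n] (SS K n ⧸ Ik K n 0) := (Submodule.quotEquivOfEqBot _ h0).symm
  refine subsingleton_of_forall_eq 0 fun y => ?_
  have := H_smul_zero (mm K n) i 1 (e : SS K n →ₗ[SS K n] _)
    (e.symm : _ →ₗ[SS K n] SS K n) (by ext; simp) h y
  rwa [one_smul] at this
end poly
end LC
end

section
namespace LC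
open Opposite Limits
section tors
variable {R : Type} [CommRing R] (J : Ideal R)

/-- `J`-power torsion submodule. -/
def tor (E : Type) [AddCommGroup E] [Module R E] : Submodule R E where
  carrier := {e | ∃ t : ℕ, ∀ r ∈ J ^ t, r • e = 0}
  zero_mem' := ⟨0, fun r _ => smul_zero r⟩
  add_mem' := by
    rintro a b ⟨s, hs⟩ ⟨t, ht⟩
    refine ⟨s + t, fun r hr => ?_⟩
    rw [smul_add, hs r (Ideal.pow_le_pow_right (by omega) hr),
      ht r (Ideal.pow_le_pow_right (by omega) hr), add_zero]
  smul_mem' := by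
    rintro x a ⟨s, hs⟩
    exact ⟨s, fun r hr => by rw [smul_comm, hs r hr, smul_zero]⟩

variable {E : Type} [AddCommGroup E] [Module R E]

lemma tor_mem {e : E} : e ∈ tor J E ↔ ∃ t : ℕ, ∀ r ∈ J ^ t, r • e = 0 := Iff.rfl

lemma tor_uniform (A : Type) [AddCommGroup A] [Module R A] [Module.Finite R A]
    (g : A →ₗ[R] tor J E) : ∃ t : ℕ, ∀ r ∈ J ^ t, ∀ a, r • g a = 0 := by
  obtain ⟨s, hs⟩ := (Module.Finite.fg_top : (⊤ : Submodule R A).FG)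
  have : ∀ a : A, ∃ t : ℕ, ∀ r ∈ J ^ t, r • g a = 0 := by
    intro a
    obtain ⟨t, ht⟩ := (g a).2
    exact ⟨t, fun r hr => Subtype.ext (ht r hr)⟩
  choose f hf using this
  refine ⟨s.sup f, fun r hr a => ?_⟩
  have ha : a ∈ Submodule.span R (s : Set A) := by rw [hs]; trivial
  induction ha using Submodule.span_induction with
  | mem x hx => exact hf x r (Ideal.pow_le_pow_right (Finset.le_sup hx) hr)
  | zero => simp
  | add x y _ _ hx hy => rw [map_add, smul_add, hx, hy, add_zero]
  | smul c x _ hx => rw [map_smul, smul_comm, hx, smul_zero]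

lemma tor_injective [IsNoetherianRing R] [Module.Injective R E] : Module.Injective R (tor J E) := by
  apply Module.Baer.injective
  intro I g
  obtain ⟨c, hc⟩ := tor_uniform J I g
  obtain ⟨k, hk⟩ := Ideal.exists_pow_inf_eq_pow_smul J (I : Submodule R R)
  have hk' := hk (k + c) (by omega)
  have key : ∀ x : I, (x : R) ∈ J ^ (k + c) → g x = 0 := by
    intro x hx
    have h1 : (x : R) ∈ J ^ (k + c - k) • (J ^ k • (⊤ : Submodule R R) ⊓ I) := by
      rw [← hk']
      exact ⟨by simpa using hx, x.2⟩
    have h2 : (x : R) ∈ J ^ c • (I : Submodule R R) := by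
      rw [Nat.add_sub_cancel_left] at h1
      exact Submodule.smul_mono le_rfl inf_le_right h1
    have h3 : x ∈ J ^ c • (⊤ : Submodule R I) := by
      have e : J ^ c • (I : Submodule R R) =
          (J ^ c • (⊤ : Submodule R I)).map (Submodule.subtype I) := by
        rw [Submodule.map_smul'', Submodule.map_top, Submodule.range_subtype]
      rw [e] at h2
      obtain ⟨y, hy, hyx⟩ := h2
      have : y = x := Subtype.ext hyx
      rwa [← this]
    refine Submodule.smul_induction_on h3 (fun r hr y _ => ?_) (fun a b ha hb => ?_)
    · rw [map_smul]; exact hc r hr y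
    · rw [map_add, ha, hb, add_zero]
  let A := I ⧸ Submodule.comap (Submodule.subtype I) (J ^ (k + c))
  let fA : A →ₗ[R] (R ⧸ J ^ (k + c)) := Submodule.mapQ _ _ (Submodule.subtype I) le_rfl
  have hfA : Function.Injective fA := by
    rw [injective_iff_map_eq_zero]
    intro a ha
    obtain ⟨a, rfl⟩ := Submodule.Quotient.mk_surjective _ a
    rw [Submodule.mapQ_apply, Submodule.Quotient.mk_eq_zero] at ha
    exact (Submodule.Quotient.mk_eq_zero _).2 ha
  let gA : A →ₗ[R] E := Submodule.liftQ _ ((tor J E).subtype ∘ₗ g) (by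
    intro x hx
    rw [LinearMap.mem_ker, LinearMap.comp_apply, key x hx, map_zero])
  obtain ⟨h, hh⟩ := Module.Injective.out fA hfA gA
  have hmem : ∀ y : R, h (Submodule.Quotient.mk y) ∈ tor J E := by
    intro y
    refine ⟨k + c, fun r hr => ?_⟩
    rw [← map_smul, ← Submodule.Quotient.mk_smul, smul_eq_mul]
    rw [(Submodule.Quotient.mk_eq_zero _).2 (Ideal.mul_mem_right y _ hr), map_zero]
  refine ⟨LinearMap.codRestrict _ (h ∘ₗ Submodule.mkQ _) hmem, fun x hx => ?_⟩
  apply Subtype.ext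
  exact hh (Submodule.Quotient.mk ⟨x, hx⟩)

lemma H1_tor (S : ShortComplex (ModuleCat.{0} R)) (hS : S.ShortExact)
    (htor : ∀ e : S.X₂, ∃ t : ℕ, ∀ r ∈ J ^ t, r • e = 0) [Injective S.X₂] (i : ℕ)
    (ih : i = 0 ∨ Subsingleton (HH J i S.X₃)) : Subsingleton (HH J (i+1) S.X₁) := by
  have := hS.mono_f
  have := hS.epi_g
  refine subsingleton_of_forall_eq 0 fun x => ?_
  obtain ⟨t, z, hz, rfl⟩ := c_surj J (i+1) x
  let Ex := (PR J t).exact_succ i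
  have hzf : dd J t (i+2) (i+1) ≫ z ≫ S.f = 0 := coc_map J hz _
  obtain ⟨ψ, hψ⟩ : ∃ ψ : CX J t i ⟶ S.X₂, dd J t (i+1) i ≫ ψ = z ≫ S.f :=
    ⟨Ex.descToInjective _ hzf, Ex.comp_descToInjective _ _⟩
  rcases ih with rfl | ih
  · have hγ : dd J t 1 0 ≫ ψ ≫ S.g = 0 := by
      rw [reassoc_of% hψ]; simp
    obtain ⟨δ, hδ⟩ : ∃ δ : Qt J t ⟶ S.X₃, (PR J t).π.f 0 ≫ δ = ψ ≫ S.g :=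
      ⟨(PR J t).isColimitCokernelCofork.desc (CokernelCofork.ofπ (ψ ≫ S.g) hγ),
        (PR J t).isColimitCokernelCofork.fac _ WalkingParallelPair.one⟩
    obtain ⟨e, he⟩ := (ModuleCat.epi_iff_surjective _).1 hS.epi_g
      (δ.hom (Submodule.Quotient.mk (1 : R)))
    obtain ⟨t1, ht1⟩ := htor e
    have htt : t ≤ t + t1 := by omega
    let ε : Qt J (t + t1) ⟶ S.X₂ := ModuleCat.ofHom
      (Submodule.liftQ _ (LinearMap.toSpanSingleton R S.X₂ e) (by
        intro r hr
        exact ht1 r (Ideal.pow_le_pow_right (by omega) hr)))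
    have hε : ε ≫ S.g = tr J htt ≫ δ := by
      refine ModuleCat.hom_ext (Submodule.linearMap_qext _ (LinearMap.ext_ring ?_))
      change S.g.hom ((1 : R) • e) = δ.hom (Submodule.Quotient.mk (1 : R))
      rw [one_smul]
      exact he
    have hph : (ph J htt).f 0 ≫ (PR J t).π.f 0 = (PR J (t + t1)).π.f 0 ≫ tr J htt :=
      ProjectiveResolution.lift_commutes_zero _ _ _
    have hz0 : ((ph J htt).f 0 ≫ ψ - ((PR J (t + t1)).π.f 0 ≫ ε : CX J (t + t1) 0 ⟶ S.X₂)) ≫ S.g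
        = 0 := by
      rw [Preadditive.sub_comp, Category.assoc, ← hδ, sub_eq_zero]
      exact ((Category.assoc _ _ _).symm.trans (congrArg (· ≫ δ) hph)).trans
        ((Category.assoc _ _ _).trans ((congrArg _ hε.symm).trans (Category.assoc _ _ _).symm))
    obtain ⟨a, ha⟩ : ∃ a, a ≫ S.f = _ := ⟨hS.exact.lift _ hz0, hS.exact.lift_f _ _⟩
    have hz1 := ph_cocycle J htt _ z hz
    rw [← c_tr J htt 1 _ hz hz1]
    refine c_boundary J (t + t1) 1 0 _ _ a ?_
    have hd : dd J (t + t1) 1 0 ≫ ((PR J (t + t1)).π.f 0 ≫ ε : CX J (t + t1) 0 ⟶ S.X₂) = 0 :=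
      ((Category.assoc _ _ _).symm.trans
        (congrArg (· ≫ ε) (PR J (t + t1)).complex_d_comp_π_f_zero)).trans zero_comp
    rw [← cancel_mono S.f, Category.assoc, Category.assoc, ha, Preadditive.comp_sub, hd, sub_zero,
      ← HomologicalComplex.Hom.comm_assoc, hψ]
  · have hx : Hm J (i+1) S.f (c J t (i+1) z hz) = 0 :=
      (c_map J t (i+1) S.f z hz hzf).trans (c_boundary J t (i+1) i _ _ ψ hψ.symm)
    exact (injective_iff_map_eq_zero _).1 (les_inj J hS i ih) _ hx

lemma H_torsion_aux [IsNoetherianRing R] (i : ℕ) (T : Type) [AddCommGroup T] [Module R T]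
    (hT : ∀ e : T, ∃ t : ℕ, ∀ r ∈ J ^ t, r • e = 0)
    (ih : ∀ (T : Type) [AddCommGroup T] [Module R T],
      (∀ e : T, ∃ t : ℕ, ∀ r ∈ J ^ t, r • e = 0) → i = 0 ∨ Subsingleton (HA J i T)) :
    Subsingleton (HA J (i+1) T) := by
  let E := Injective.under (ModuleCat.of R T)
  let embC : T →ₗ[R] E := (Injective.ι (ModuleCat.of R T)).hom
  have hemb : Function.Injective embC :=
    (ModuleCat.mono_iff_injective (Injective.ι (ModuleCat.of R T))).1 inferInstance
  have hE' : Injective (ModuleCat.of R E) := inferInstanceAs (Injective E)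
  have hE : Module.Injective R E := Module.injective_module_of_injective_object R E
  have hE2 : Module.Injective R (tor J E) := tor_injective J
  have hE3 : Injective (ModuleCat.of R (tor J E)) := Module.injective_object_of_injective_module R _
  let f : T →ₗ[R] tor J E := LinearMap.codRestrict _ embC (by
    intro x
    obtain ⟨t, ht⟩ := hT x
    exact ⟨t, fun r hr => by rw [← map_smul, ht r hr, map_zero]⟩)
  have hf : Function.Injective f := fun x y h => hemb (congrArg Subtype.val h)
  have hex : Function.Exact f (LinearMap.range f).mkQ := LinearMap.exact_map_mkQ_range f
  have htor : ∀ e : tor J E, ∃ t : ℕ, ∀ r ∈ J ^ t, r • e = 0 := by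
    intro e
    obtain ⟨t, ht⟩ := e.2
    exact ⟨t, fun r hr => Subtype.ext (ht r hr)⟩
  have hI : Injective (SC f (LinearMap.range f).mkQ hex).X₂ := hE3
  refine H1_tor J (SC f (LinearMap.range f).mkQ hex)
    (SC_se _ _ hex hf (Submodule.mkQ_surjective _)) htor i (ih _ ?_)
  intro e
  obtain ⟨e, rfl⟩ := Submodule.mkQ_surjective _ e
  obtain ⟨t, ht⟩ := htor e
  exact ⟨t, fun r hr => by rw [← map_smul, ht r hr, map_zero]⟩

lemma H_torsion [IsNoetherianRing R] (i : ℕ) : ∀ (T : Type) [AddCommGroup T] [Module R T],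
    (∀ e : T, ∃ t : ℕ, ∀ r ∈ J ^ t, r • e = 0) → Subsingleton (HA J (i+1) T) := by
  induction i with
  | zero => exact fun T _ _ hT => H_torsion_aux J 0 T hT (fun _ _ _ _ => Or.inl rfl)
  | succ i ih => exact fun T _ _ hT => H_torsion_aux J (i+1) T hT (fun T _ _ h => Or.inr (ih T h))

end tors
end LC
end

section
namespace LC
section loc
variable {R : Type} [CommRing R]

/-- scalars which factor through `π`. -/
def aI {F Q : Type} [AddCommGroup F] [Module R F] [AddCommGroup Q] [Module R Q] (π : F →ₗ[R] Q) :
    Ideal R where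
  carrier := {s | ∃ u : Q →ₗ[R] F, π ∘ₗ u = s • LinearMap.id}
  zero_mem' := ⟨0, by simp⟩
  add_mem' := by
    rintro a b ⟨u, hu⟩ ⟨v, hv⟩
    exact ⟨u + v, by rw [LinearMap.comp_add, hu, hv, add_smul]⟩
  smul_mem' := by
    rintro r a ⟨u, hu⟩
    exact ⟨r • u, by rw [LinearMap.comp_smul, hu, smul_smul, smul_eq_mul]⟩

lemma aI_pow [IsNoetherianRing R] {F Q : Type} [AddCommGroup F] [Module R F] [AddCommGroup Q]
    [Module R Q] [Module.Finite R Q] (π : F →ₗ[R] Q) (hπ : Function.Surjective π) (f : R)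
    (h : ∀ p : PrimeSpectrum R, f ∉ p.asIdeal →
      Module.Free (Localization.AtPrime p.asIdeal) (LocalizedModule p.asIdeal.primeCompl Q)) :
    f ∈ (aI π).radical := by
  have : Module.FinitePresentation R Q := Module.finitePresentation_of_finite R Q
  have hp : Module.Projective (Localization.Away f) (LocalizedModule.Away f Q) :=
    Module.basicOpen_subset_freeLocus_iff.1 fun p hp => Module.mem_freeLocus.2 (h p hp)
  obtain ⟨g, hg⟩ := Module.projective_lifting_property
    (LocalizedModule.map (Submonoid.powers f) π) (LinearMap.id)
    (LocalizedModule.map_surjective (Submonoid.powers f) π hπ)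
  let g' : LocalizedModule (Submonoid.powers f) Q →ₗ[R] LocalizedModule (Submonoid.powers f) F :=
    g.restrictScalars R
  obtain ⟨u, s, hu⟩ := Module.FinitePresentation.exists_lift_of_isLocalizedModule
    (Submonoid.powers f) (LocalizedModule.mkLinearMap (Submonoid.powers f) F)
    (g' ∘ₗ LocalizedModule.mkLinearMap (Submonoid.powers f) Q)
  have e : LocalizedModule.mkLinearMap (Submonoid.powers f) Q ∘ₗ (π ∘ₗ u) =
      LocalizedModule.mkLinearMap (Submonoid.powers f) Q ∘ₗ (s.1 • LinearMap.id) := by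
    ext x
    have h1 := congrArg (fun k => LocalizedModule.map (Submonoid.powers f) π (k x)) hu
    have h2 := LinearMap.congr_fun hg (LocalizedModule.mkLinearMap (Submonoid.powers f) Q x)
    have h3 : LocalizedModule.map (Submonoid.powers f) π
      (LocalizedModule.mkLinearMap (Submonoid.powers f) F (u x)) =
      LocalizedModule.mkLinearMap (Submonoid.powers f) Q (π (u x)) := by
      simp [LocalizedModule.map_mk]
    refine h3.symm.trans (h1.trans ?_)
    have h4 : (LocalizedModule.map (Submonoid.powers f) π)
      (s.1 • g (LocalizedModule.mkLinearMap (Submonoid.powers f) Q x)) = s.1 • 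
        (LocalizedModule.map (Submonoid.powers f) π)
          (g (LocalizedModule.mkLinearMap (Submonoid.powers f) Q x)) :=
      ((LocalizedModule.map (Submonoid.powers f) π).restrictScalars R).map_smul _ _
    refine h4.trans ?_
    rw [LinearMap.comp_apply, LinearMap.smul_apply, map_smul]
    exact congrArg (s.1 • ·) h2
  obtain ⟨s', hs'⟩ := Module.Finite.exists_smul_of_comp_eq_of_isLocalizedModule
    (Submonoid.powers f) (LocalizedModule.mkLinearMap (Submonoid.powers f) Q) _ _ e
  obtain ⟨k, hk⟩ := (s' * s).2
  refine ⟨k, ?_⟩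
  have hk' : f ^ k = s'.1 * s.1 := hk
  rw [hk']
  refine ⟨s'.1 • u, ?_⟩
  rw [LinearMap.comp_smul, ← smul_smul]
  exact hs'

lemma aI_irrel [IsNoetherianRing R] {F Q : Type} [AddCommGroup F] [Module R F] [AddCommGroup Q]
    [Module R Q] [Module.Finite R Q] (π : F →ₗ[R] Q) (hπ : Function.Surjective π) (J : Ideal R)
    (h : ∀ p : PrimeSpectrum R, p.asIdeal ≠ J →
      Module.Free (Localization.AtPrime p.asIdeal) (LocalizedModule p.asIdeal.primeCompl Q)) :
    ∃ c : ℕ, J ^ c ≤ aI π := by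
  refine Ideal.exists_pow_le_of_le_radical_of_fg (fun f hf => ?_) (IsNoetherian.noetherian J)
  refine aI_pow π hπ f fun p hp => h p ?_
  rintro rfl
  exact hp hf

end loc
end LC
end

section
namespace LC
section fin
variable {R : Type} [CommRing R] (J : Ideal R)
variable {A B C : Type} [AddCommGroup A] [Module R A] [AddCommGroup B] [Module R B]
  [AddCommGroup C] [Module R C]

lemma nilp (V : Type) [AddCommGroup V] [Module R V] (k : ℕ) (hk : ∀ s ∈ J ^ k, ∀ v : V, s • v = 0)
    (h : (⊤ : Submodule R V) ≤ J • ⊤) : Subsingleton V := by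
  have h1 : ∀ m : ℕ, (⊤ : Submodule R V) ≤ J ^ m • ⊤ := by
    intro m
    induction m with
    | zero => simp
    | succ m ih =>
      refine h.trans ?_
      rw [pow_succ', Submodule.mul_smul]
      exact Submodule.smul_mono le_rfl ih
  refine subsingleton_of_forall_eq 0 fun v => ?_
  have h2 := h1 k (Submodule.mem_top (x := v))
  refine Submodule.smul_induction_on h2 (fun s hs v _ => hk s hs v) ?_
  intro a b ha hb
  rw [ha, hb, add_zero]

lemma min_mem [Module.Free R A] [Module.Finite R A] (f : A →ₗ[R] B)
    (hf : LinearMap.range f ≤ J • (⊤ : Submodule R B)) :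
    f ∈ J • (⊤ : Submodule R (A →ₗ[R] B)) := by
  let b := Module.Free.chooseBasis R A
  have e : f = ∑ k, (b.coord k).smulRight (f (b k)) := by
    refine b.ext fun k => ?_
    rw [LinearMap.sum_apply, Finset.sum_eq_single k]
    · simp
    · intro j _ hj
      simp [hj.symm]
    · simp
  rw [e]
  refine Submodule.sum_mem _ fun k _ => ?_
  have hk := hf ⟨b k, rfl⟩
  refine Submodule.smul_induction_on (p := fun y => (b.coord k).smulRight y ∈ _) hk ?_ ?_
  · intro r hr y _
    have : (b.coord k).smulRight (r • y) = r • (b.coord k).smulRight y := by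
      ext x; exact smul_comm _ _ _
    rw [this]
    exact Submodule.smul_mem_smul hr trivial
  · intro x y hx hy
    have : (b.coord k).smulRight (x + y) = (b.coord k).smulRight x + (b.coord k).smulRight y := by
      ext x; simp
    rw [this]
    exact Submodule.add_mem _ hx hy

/-- a linear functor of `Hom` maps `J Hom` into maps with image in `J`. -/
lemma lin_range {V W : Type} [AddCommGroup V] [Module R V] [AddCommGroup W] [Module R W]
    (Φ : (A →ₗ[R] B) → (V →ₗ[R] W)) (hadd : ∀ f g, Φ (f + g) = Φ f + Φ g)
    (hsmul : ∀ (r : R) f, Φ (r • f) = r • Φ f) (f : A →ₗ[R] B)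
    (hf : f ∈ J • (⊤ : Submodule R (A →ₗ[R] B))) (v : V) : Φ f v ∈ J • (⊤ : Submodule R W) := by
  refine Submodule.smul_induction_on (p := fun f => Φ f v ∈ _) hf ?_ ?_
  · intro r hr g _
    rw [hsmul]
    exact Submodule.smul_mem_smul hr trivial
  · intro x y hx hy
    rw [hadd]
    exact Submodule.add_mem _ hx hy

lemma retr (L : Type) [AddCommGroup L] [Module R L] [Module.Free R L] [Nontrivial L] :
    ∃ (u : A →ₗ[R] L ⊗[R] A) (v : L ⊗[R] A →ₗ[R] A), v ∘ₗ u = LinearMap.id := by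
  let b := Module.Free.chooseBasis R L
  have : Nonempty (Module.Free.ChooseBasisIndex R L) := b.index_nonempty
  obtain ⟨k⟩ := this
  refine ⟨TensorProduct.mk R L A (b k), TensorProduct.lid R A ∘ₗ LinearMap.rTensor A (b.coord k), ?_⟩
  ext x
  simp

lemma ladder_surj [IsNoetherianRing R] {f : A →ₗ[R] B} {g : B →ₗ[R] C} (h : Function.Exact f g)
    (hg : Function.Surjective g) (p : ℕ) (hA : Subsingleton (HA J (p+1) A))
    (hk : ∀ e : LinearMap.ker f, ∃ t : ℕ, ∀ r ∈ J ^ t, r • e = 0) :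
    Function.Surjective (Hl J p g) := by
  have h1 : Function.Exact (LinearMap.ker f).subtype f.rangeRestrict := by
    rw [LinearMap.exact_iff, Submodule.range_subtype, LinearMap.ker_rangeRestrict]
  have h2 : Function.Exact (LinearMap.range f).subtype g := by
    rw [LinearMap.exact_iff, Submodule.range_subtype, LinearMap.exact_iff.1 h]
  have s1 := H_surj J h1 (Submodule.subtype_injective _) f.surjective_rangeRestrict (p+1)
    (H_torsion J (p+1) _ hk)
  exact H_surj J h2 (Submodule.subtype_injective _) hg p s1.subsingleton

lemma ladder_surj' [IsNoetherianRing R] {f : A →ₗ[R] B} {g : B →ₗ[R] C} (h : Function.Exact f g)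
    (hg : Function.Surjective g) (p : ℕ) (hC : Subsingleton (HA J p C))
    (hk : ∀ e : LinearMap.ker f, ∃ t : ℕ, ∀ r ∈ J ^ t, r • e = 0) :
    Function.Surjective (Hl J p f) := by
  have h1 : Function.Exact (LinearMap.ker f).subtype f.rangeRestrict := by
    rw [LinearMap.exact_iff, Submodule.range_subtype, LinearMap.ker_rangeRestrict]
  have h2 : Function.Exact (LinearMap.range f).subtype g := by
    rw [LinearMap.exact_iff, Submodule.range_subtype, LinearMap.exact_iff.1 h]
  have s1 := H_surj J h1 (Submodule.subtype_injective _) f.surjective_rangeRestrict p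
    (H_torsion J p _ hk)
  have s2 := H_surj' J h2 (Submodule.subtype_injective _) hg p hC
  have : Hl J p f = Hl J p (LinearMap.range f).subtype ∘ₗ Hl J p f.rangeRestrict := by
    rw [← Hl_comp]; rfl
  rw [this]
  exact s2.comp s1

lemma ker_tors (Q : Type) [AddCommGroup Q] [Module R Q] (f : A →ₗ[R] B) (k : ℕ)
    (h : ∀ s ∈ J ^ k, ∃ ρ : B →ₗ[R] A, ρ ∘ₗ f = s • LinearMap.id)
    (e : LinearMap.ker (LinearMap.rTensor Q f)) : ∃ t : ℕ, ∀ r ∈ J ^ t, r • e = 0 := by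
  refine ⟨k, fun r hr => ?_⟩
  obtain ⟨ρ, hρ⟩ := h r hr
  apply Subtype.ext
  have h1 : LinearMap.rTensor Q (ρ ∘ₗ f) e.1 = r • e.1 := by
    rw [hρ, LinearMap.rTensor_smul, LinearMap.rTensor_id]; rfl
  rw [LinearMap.rTensor_comp, LinearMap.comp_apply, e.2, map_zero] at h1
  exact h1.symm

/-- The key abstract statement. -/
lemma key [IsNoetherianRing R] {L1 L0 N Q F : Type} [AddCommGroup L1] [Module R L1] [AddCommGroup L0] [Module R L0]
    [AddCommGroup N] [Module R N] [AddCommGroup Q] [Module R Q] [AddCommGroup F] [Module R F]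
    [Module.Free R L1] [Module.Finite R L1] [Module.Free R L0] [Module.Finite R L0]
    [Module.Free R F] [Module.Finite R F] [Nontrivial L0]
    (d0 : L1 →ₗ[R] L0) (aug : L0 →ₗ[R] N) (haug : Function.Surjective aug)
    (hex0 : LinearMap.range d0 = LinearMap.ker aug)
    (hmin : LinearMap.range d0 ≤ J • (⊤ : Submodule R L0))
    (P1 : Submodule R L1) (hP1 : P1 = LinearMap.ker d0)
    (c : ℕ) (hc : J ^ c ≤ Module.annihilator R N)
    (π : F →ₗ[R] Q) (k : ℕ) (hk : J ^ k ≤ aI π)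
    (p : ℕ) (hR : Subsingleton (HA J (p+1) R)) (hM : ¬ Subsingleton (HA J (p+1) Q)) :
    ¬ Function.Surjective (LinearMap.rTensor (HA J (p+1) Q) d0) ∧
    ¬ Subsingleton (HA J (p+2) (P1 ⊗[R] Q)) := by
  have hd := min_mem J d0 hmin
  constructor
  · intro hs
    apply hM
    have hkill : ∀ s ∈ J ^ k, ∀ x : HA J (p+1) Q, s • x = 0 := by
      intro s hs x
      obtain ⟨u, hu⟩ := hk hs
      exact H_smul_zero J (p+1) s u π hu (H_free J (p+1) hR) x
    have h0 : Subsingleton (L0 ⊗[R] HA J (p+1) Q) := by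
      refine nilp J _ k ?_ ?_
      · intro s hs v
        induction v using TensorProduct.induction_on with
        | zero => simp
        | tmul x y => rw [← TensorProduct.tmul_smul, hkill s hs, TensorProduct.tmul_zero]
        | add x y hx hy => rw [smul_add, hx, hy, add_zero]
      · intro y _
        obtain ⟨x, rfl⟩ := hs y
        exact lin_range J (fun f => LinearMap.rTensor (HA J (p+1) Q) f)
          (fun f g => LinearMap.rTensor_add _ f g) (fun r f => LinearMap.rTensor_smul _ r f) d0 hd x
    obtain ⟨u, v, huv⟩ := retr (R := R) (A := HA J (p+1) Q) L0
    refine subsingleton_of_forall_eq 0 fun x => ?_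
    have := LinearMap.congr_fun huv x
    rw [LinearMap.comp_apply, Subsingleton.elim (u x) 0, map_zero] at this
    exact this.symm
  · intro hs
    apply hM
    have hkill : ∀ s ∈ J ^ k, ∀ x : HA J (p+1) (L0 ⊗[R] Q), s • x = 0 := by
      intro s hs x
      obtain ⟨u, hu⟩ := hk hs
      refine H_smul_zero J (p+1) s (LinearMap.lTensor L0 u) (LinearMap.lTensor L0 π) ?_
        (H_free J (p+1) hR) x
      rw [← LinearMap.lTensor_comp, hu, LinearMap.lTensor_smul, LinearMap.lTensor_id]
    have hsc : ∀ s ∈ J ^ c, ∀ x : L0, s • x ∈ LinearMap.range d0 := by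
      intro s hs x
      rw [hex0, LinearMap.mem_ker, map_smul]
      exact Module.mem_annihilator.1 (hc hs) _
    -- the two exact sequences
    have e1 : Function.Exact P1.subtype d0.rangeRestrict := by
      rw [LinearMap.exact_iff, Submodule.range_subtype, LinearMap.ker_rangeRestrict, hP1]
    have e0 : Function.Exact (LinearMap.range d0).subtype aug := by
      rw [LinearMap.exact_iff, Submodule.range_subtype, hex0]
    have s1 : Function.Surjective (Hl J (p+1) (LinearMap.rTensor Q d0.rangeRestrict)) := by
      refine ladder_surj J (rTensor_exact Q e1 d0.surjective_rangeRestrict)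
        (LinearMap.rTensor_surjective Q d0.surjective_rangeRestrict) (p+1) hs
        (ker_tors J Q _ c ?_)
      intro s hs
      obtain ⟨σ, hσ⟩ := Module.projective_lifting_property d0.rangeRestrict
        (LinearMap.codRestrict (LinearMap.range d0) (s • LinearMap.id : L0 →ₗ[R] L0) (hsc s hs))
        d0.surjective_rangeRestrict
      have hσ' : ∀ x, d0 (σ x) = s • x := fun x => congrArg Subtype.val (LinearMap.congr_fun hσ x)
      refine ⟨LinearMap.codRestrict P1 (s • LinearMap.id - σ ∘ₗ d0) ?_, ?_⟩
      · intro x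
        rw [hP1, LinearMap.mem_ker]
        simp [hσ']
      · ext x
        have hx : d0 x.1 = 0 := LinearMap.mem_ker.1 (hP1.le x.2)
        simp [hx]
    have s0 : Function.Surjective (Hl J (p+1) (LinearMap.rTensor Q (LinearMap.range d0).subtype)) := by
      refine ladder_surj' J (rTensor_exact Q e0 haug)
        (LinearMap.rTensor_surjective Q haug) (p+1) (H_torsion J p _ ?_)
        (ker_tors J Q _ c ?_)
      · intro v
        refine ⟨c, fun s hs => ?_⟩
        induction v using TensorProduct.induction_on with
        | zero => simp
        | tmul x y =>
          rw [TensorProduct.smul_tmul', Module.mem_annihilator.1 (hc hs), TensorProduct.zero_tmul]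
        | add x y hx hy => rw [smul_add, hx, hy, add_zero]
      · intro s hs
        refine ⟨LinearMap.codRestrict (LinearMap.range d0) (s • LinearMap.id : L0 →ₗ[R] L0)
          (hsc s hs), ?_⟩
        ext x
        simp
    have s2 : Function.Surjective (Hl J (p+1) (LinearMap.rTensor Q d0)) := by
      have : LinearMap.rTensor Q d0 = LinearMap.rTensor Q (LinearMap.range d0).subtype ∘ₗ
          LinearMap.rTensor Q d0.rangeRestrict := by
        rw [← LinearMap.rTensor_comp]; rfl
      rw [this, Hl_comp]
      exact s0.comp s1
    have h0 : Subsingleton (HA J (p+1) (L0 ⊗[R] Q)) := by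
      refine nilp J _ k hkill ?_
      intro y _
      obtain ⟨x, rfl⟩ := s2 y
      refine lin_range J (fun f => Hl J (p+1) (LinearMap.rTensor Q f)) ?_ ?_ d0 hd x
      · intro f g; rw [LinearMap.rTensor_add, Hl_add]
      · intro r f; rw [LinearMap.rTensor_smul, Hl_smul]
    obtain ⟨u, v, huv⟩ := retr (R := R) (A := Q) L0
    refine subsingleton_of_forall_eq 0 fun x => ?_
    have := H_smul_zero J (p+1) 1 u v (by rw [huv, one_smul]) h0 x
    rwa [one_smul] at this

end fin
end LC
end

/-- Jyotilingam's theorem for `k = 1`.  If `N` is a (nonzero)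
finite length graded `S`-module with first syzygy bundle `P₁` and `Q` is a bundle
on `ℙⁿ` with `M = H^l_*(Q) ≠ 0`, `1 ≤ l ≤ n-2`, then the map `L₁ ⊗ M → L₀ ⊗ M`
induced by the resolution of `N` is not surjective, and hence
`H^{l+1}_*(P₁ ⊗ Q) ≠ 0`. -/
theorem jyotilingam_k_one
    (K : Type) [Field K] (n : ℕ)
    (N : Type) [AddCommGroup N] [Module (PolyS K n) N]
    (hN : Nontrivial N)
    (hNfl : IsGradedFiniteLength K n N)
    (res : MinimalResolution K n N)
    (Q : Type) [AddCommGroup Q] [Module (PolyS K n) Q]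
    (hQ : IsBundleModule K n Q)
    (l : ℕ) (hl1 : 1 ≤ l) (hl2 : l ≤ n - 2)
    (hM : ¬ Subsingleton (Hstar K n l Q)) :
    ¬ Function.Surjective (LinearMap.rTensor ↥(Hstar K n l Q) (res.d 0)) ∧
    ¬ Subsingleton (Hstar K n (l+1)
      (TensorProduct (PolyS K n) ↥(LinearMap.range (res.d 1)) Q)) := by
  have : Module.Finite (PolyS K n) Q := hQ.finite
  have := res.free 0
  have := res.free 1
  have := res.finite 0
  have := res.finite 1
  have : Nontrivial (res.L 0) := res.aug_surjective.nontrivial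
  obtain ⟨c, hc⟩ := hNfl.2
  obtain ⟨m, π, hπ⟩ := Module.Finite.exists_fin' (PolyS K n) Q
  obtain ⟨k, hk⟩ := LC.aI_irrel π hπ (irrel K n) hQ.locFree
  exact LC.key (irrel K n) (res.d 0) res.aug res.aug_surjective res.exact0 (res.minimal 0)
    (LinearMap.range (res.d 1)) (res.exact 0) c hc π k hk l (LC.H_SS K n (l+1) (by omega)) hM
end
end
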